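/- arXiv:2307.16263 — 2 statements merged into one kernel-verified Lean document; each statement's English description precedes it below -/
import Mathlib

section
/- Let (G,C) be a strongly connected inhomogeneous Mauldin–Williams graph in ℝ^d satisfying the SOSC with condensation sets (C_i)_{i∈V} such that ∫₀^∞ e^{−s₀(G)t} N_{e^{−t}}(C_i) dt < ∞ for all i ∈ V. Define L_i^*(t) = Σ_{e∈E_i} N_{e^{−t}}(S_e(K_{t(e)}^C)) − N_{e^{−t}}(K_i^C). Then Σ_{k=0}^∞ sup_{t∈[k,k+1]} e^{−s₀(G)t} |L_i^*(t)| < ∞ for all i ∈ V. -/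
open Set Filter Topology MeasureTheory Metric

noncomputable section

/-- Points of `ℝ^d`. -/
abbrev Pt (d : ℕ) := EuclideanSpace ℝ (Fin d)

/-- The `r`-covering number of `A ⊆ ℝ^d`: the least number of closed balls of
radius `r` needed to cover `A`. -/
noncomputable def coveringNumber {d : ℕ} (A : Set (Pt d)) (r : ℝ) : ℕ :=
  sInf {k : ℕ | ∃ c : Fin k → Pt d, A ⊆ ⋃ i, Metric.closedBall (c i) r}

/-- A Mauldin–Williams graph in `ℝ^d` over a finite directed multigraph with
vertex type `V` and edge type `E`: each vertex `i` carries a non-empty compact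
set `X i` equal to the closure of its interior, and each edge `e` carries a
contractive similarity `S e` of ratio `r e ∈ (0,1)` mapping `X (term e)` into
`X (init e)`. -/
structure MWGraph (d : ℕ) (V E : Type) [Fintype V] [Fintype E] where
  init : E → V
  term : E → V
  X : V → Set (Pt d)
  S : E → Pt d → Pt d
  r : E → ℝ
  X_nonempty : ∀ i, (X i).Nonempty
  X_compact : ∀ i, IsCompact (X i)
  X_regular : ∀ i, closure (interior (X i)) = X i
  r_pos : ∀ e, 0 < r e
  r_lt_one : ∀ e, r e < 1
  S_maps : ∀ e, Set.MapsTo (S e) (X (term e)) (X (init e))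
  S_sim : ∀ e x y, dist (S e x) (S e y) = r e * dist x y

namespace MWGraph

variable {d : ℕ} {V E : Type} [Fintype V] [Fintype E]

variable (G : MWGraph d V E)

/-- `G.IsPathFrom j γ` holds iff the list of edges `γ` is a directed path
starting at vertex `j`. -/
def IsPathFrom : V → List E → Prop
  | _, [] => True
  | j, e :: es => G.init e = j ∧ IsPathFrom (G.term e) es

/-- Terminal vertex of the path `γ` starting at `j`. -/
def pathTerm : V → List E → V
  | j, [] => j
  | _, e :: es => pathTerm (G.term e) es

/-- `S_γ = S_{e₁} ∘ ⋯ ∘ S_{eₙ}` (with `S_∅ = id`). -/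
def pathMap : List E → Pt d → Pt d
  | [] => id
  | e :: es => G.S e ∘ pathMap es

/-- `r_γ = r_{e₁} ⋯ r_{eₙ}` (with `r_∅ = 1`). -/
def pathRatio (γ : List E) : ℝ := (γ.map G.r).prod

/-- The underlying multigraph is strongly connected: for every ordered pair of
vertices there is a (non-empty) directed path from the first to the second. -/
def StronglyConnected : Prop :=
  ∀ i j : V, ∃ γ : List E, γ ≠ [] ∧ G.IsPathFrom i γ ∧ G.pathTerm i γ = j

/-- `K` is the list of graph-directed self-similar sets of `G`: the unique list
of non-empty compact sets with `K i = ⋃_{e ∈ E_i} S_e (K (term e))`. -/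
def IsAttractor (K : V → Set (Pt d)) : Prop :=
  (∀ i, IsCompact (K i)) ∧ (∀ i, (K i).Nonempty) ∧
    ∀ i, K i = ⋃ e ∈ {e : E | G.init e = i}, G.S e '' K (G.term e)

/-- `C` is an admissible list of condensation sets: compact subsets of the `X i`. -/
def IsCondensation (C : V → Set (Pt d)) : Prop :=
  ∀ i, IsCompact (C i) ∧ C i ⊆ G.X i

/-- `K` is the list of inhomogeneous graph-directed self-similar sets of `(G, C)`:
the unique list of non-empty compact sets with
`K i = ⋃_{e ∈ E_i} S_e (K (term e)) ∪ C i`. -/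
def IsInhomAttractor (C : V → Set (Pt d)) (K : V → Set (Pt d)) : Prop :=
  (∀ i, IsCompact (K i)) ∧ (∀ i, (K i).Nonempty) ∧
    ∀ i, K i = (⋃ e ∈ {e : E | G.init e = i}, G.S e '' K (G.term e)) ∪ C i

/-- `G` satisfies the open set condition with the open sets `U`. -/
def IsOSCWith (U : V → Set (Pt d)) : Prop :=
  (∀ i, (U i).Nonempty) ∧ (∀ i, IsOpen (U i)) ∧ (∀ i, Bornology.IsBounded (U i)) ∧
    (∀ i, U i ⊆ G.X i) ∧
    (∀ i, (⋃ e ∈ {e : E | G.init e = i}, G.S e '' U (G.term e)) ⊆ U i) ∧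
    ∀ e e' : E, G.init e = G.init e' → e ≠ e' →
      Disjoint (G.S e '' U (G.term e)) (G.S e' '' U (G.term e'))

/-- The set `{-log r_γ : γ a directed cycle of G}`. -/
def cycleSet : Set ℝ :=
  {x : ℝ | ∃ (j : V) (γ : List E), γ ≠ [] ∧ G.IsPathFrom j γ ∧ G.pathTerm j γ = j ∧
    x = -Real.log (G.pathRatio γ)}

/-- `G_M`, the smallest closed additive subgroup of `ℝ` containing
`{-log r_γ : γ a directed cycle}`. -/
def GM : Set ℝ := closure ((AddSubgroup.closure (G.cycleSet) : AddSubgroup ℝ) : Set ℝ)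

variable [DecidableEq V]

/-- The matrix `A_G^s` with entries `(A_G^s)_{ij} = Σ_{e ∈ E_{ij}} r_e^s`. -/
def Amatrix (s : ℝ) : Matrix V V ℝ :=
  Matrix.of fun i j => ∑ e : E, if G.init e = i ∧ G.term e = j then G.r e ^ s else 0

end MWGraph

/-- Spectral radius of a real square matrix: the largest modulus of a complex
eigenvalue. -/
noncomputable def matrixSpectralRadius {n : Type} [Fintype n] [DecidableEq n]
    (A : Matrix n n ℝ) : ℝ :=
  sSup {x : ℝ | ∃ μ : ℂ, μ ∈ spectrum ℂ (A.map (fun a : ℝ => (a : ℂ))) ∧ x = ‖μ‖}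

/-- `s` is the (unique) exponent `s ≥ 0` with `ρ(A_G^s) = 1`, i.e. `s = s₀(G)`. -/
def IsS0 {d : ℕ} {V E : Type} [Fintype V] [Fintype E] [DecidableEq V]
    (G : MWGraph d V E) (s : ℝ) : Prop :=
  0 ≤ s ∧ matrixSpectralRadius (G.Amatrix s) = 1

/-!
The pieces `S_e(K_{t(e)}^C)` of `K_i^C` can meet only near the boundaries of the open sets
`S_e(U_{t(e)})`. Hence `|L_i^*(t)|` is at most the number of balls covering `C_i` and the layers of
width a multiple of `e^{-t}` along these boundaries. The normalized covering numbers of the boundary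
layers satisfy the renewal inequality of `G`, and they do so with a saving: by the SOSC every `U_i`
contains a cylinder at positive distance from its complement, which stops contributing at small
scales. Since `ρ(A_G^s) ≤ 1` and `G` is strongly connected, there is a positive vector `v` with
`A_G^s v ≤ v`. Bounds proportional to `v` are preserved by the renewal operator, and the saving made
at the interior cylinders outweighs the forcing from the condensation sets. Applied to sums over the
times `x, x - 1, x - 2, …` instead of single times, this bounds these sums uniformly, which is the
claimed summability.
-/

/-! ### Subinvariant vectors of nonnegative matrices -/

section SpectralRadius

theorem exists_norm_pow_le_of_spectralRadius_lt {B : Type*} [NormedRing B] [NormedAlgebra ℂ B]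
    [CompleteSpace B] {a : B} {c : ℝ} (h : spectralRadius ℂ a < ENNReal.ofReal c) :
    ∃ N : ℕ, 0 < N ∧ ‖a ^ N‖ ≤ c ^ N := by
  have hlim := spectrum.pow_norm_pow_one_div_tendsto_nhds_spectralRadius a
  obtain ⟨N, hN, hN0⟩ := ((hlim.eventually_lt_const h).and (eventually_gt_atTop 0)).exists
  have hroot : ‖a ^ N‖ ^ (1 / N : ℝ) < c :=
    (ENNReal.ofReal_lt_ofReal_iff_of_nonneg (by positivity)).1 hN
  refine ⟨N, hN0, ?_⟩
  calc ‖a ^ N‖ = (‖a ^ N‖ ^ (1 / N : ℝ)) ^ N := by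
        rw [one_div, Real.rpow_inv_natCast_pow (norm_nonneg _) hN0.ne']
    _ ≤ c ^ N := by gcongr

variable {n : Type} [Fintype n] [DecidableEq n] {A : Matrix n n ℝ}

theorem spectralRadius_map_ofReal_le (A : Matrix n n ℝ) :
    spectralRadius ℂ (A.map fun a : ℝ => (a : ℂ)) ≤ ENNReal.ofReal (matrixSpectralRadius A) := by
  have hfin : {x : ℝ | ∃ μ ∈ spectrum ℂ (A.map fun a : ℝ => (a : ℂ)), x = ‖μ‖}.Finite :=
    ((Matrix.finite_spectrum (A.map fun a : ℝ => (a : ℂ))).image norm).subset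
      fun _ ⟨μ, hμ, hx⟩ => ⟨μ, hμ, hx.symm⟩
  refine iSup₂_le fun μ hμ => ?_
  calc (‖μ‖₊ : ENNReal) = ENNReal.ofReal ‖μ‖ := (ofReal_norm μ).symm
    _ ≤ ENNReal.ofReal (matrixSpectralRadius A) :=
        ENNReal.ofReal_le_ofReal (le_csSup hfin.bddAbove ⟨μ, hμ, rfl⟩)

section

attribute [local instance] Matrix.linftyOpNormedRing Matrix.linftyOpNormedAlgebra

theorem exists_pow_mulVec_one_le {c : ℝ} (hc : 0 < c) (h : matrixSpectralRadius A < c) :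
    ∃ N : ℕ, 0 < N ∧ (A ^ N).mulVec 1 ≤ c ^ N • 1 := by
  obtain ⟨N, hN0, hN⟩ := exists_norm_pow_le_of_spectralRadius_lt <|
    (spectralRadius_map_ofReal_le A).trans_lt ((ENNReal.ofReal_lt_ofReal_iff hc).2 h)
  refine ⟨N, hN0, fun i => ?_⟩
  set B := A.map fun a : ℝ => (a : ℂ)
  have hentry : ((A ^ N).mulVec 1 i : ℂ) = (B ^ N).mulVec 1 i := by
    have hpow : B ^ N = (A ^ N).map Complex.ofRealHom :=
      (map_pow Complex.ofRealHom.mapMatrix A N).symm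
    simp [hpow, Matrix.mulVec, dotProduct]
  calc (A ^ N).mulVec 1 i ≤ ‖((A ^ N).mulVec 1 i : ℂ)‖ := by simpa using le_abs_self _
    _ ≤ ‖(B ^ N).mulVec 1‖ := hentry ▸ norm_le_pi_norm _ i
    _ ≤ ‖B ^ N‖ * ‖(1 : n → ℂ)‖ := Matrix.linfty_opNorm_mulVec _ _
    _ ≤ c ^ N * 1 := by
        gcongr
        exact (pi_norm_le_iff_of_nonneg zero_le_one).2 fun _ => by simp
    _ = (c ^ N • (1 : n → ℝ)) i := by simp

end

-- With `w` the sum, `A w - c w` telescopes to `c (c⁻¹ ^ N A ^ N x - x)`.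
theorem mulVec_sum_pow_le {c : ℝ} (hc : 0 < c) {N : ℕ} {x : n → ℝ}
    (hx : (A ^ N).mulVec x ≤ c ^ N • x) :
    A.mulVec (∑ k ∈ Finset.range N, c⁻¹ ^ k • (A ^ k).mulVec x) ≤
      c • ∑ k ∈ Finset.range N, c⁻¹ ^ k • (A ^ k).mulVec x := by
  set b : ℕ → n → ℝ := fun k => c⁻¹ ^ k • (A ^ k).mulVec x
  have hsucc (k : ℕ) : A.mulVec (b k) = c • b (k + 1) := by
    simp only [b, Matrix.mulVec_smul, Matrix.mulVec_mulVec, ← pow_succ', smul_smul]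
    congr 1
    rw [pow_succ]
    field_simp
  have hN : b N ≤ b 0 := by
    calc b N ≤ c⁻¹ ^ N • c ^ N • x := smul_le_smul_of_nonneg_left hx (by positivity)
      _ = b 0 := by simp [b, smul_smul, hc.ne']
  calc A.mulVec (∑ k ∈ Finset.range N, b k) = c • ∑ k ∈ Finset.range N, b (k + 1) := by
        simp only [Matrix.mulVec_sum, hsucc, Finset.smul_sum]
    _ ≤ c • ∑ k ∈ Finset.range N, b k := by
        refine smul_le_smul_of_nonneg_left (le_of_add_le_add_right (a := b 0) ?_) hc.le
        rw [← Finset.sum_range_succ', Finset.sum_range_succ]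
        gcongr

theorem exists_stdSimplex_mulVec_le_smul [Nonempty n] (hA : ∀ i j, 0 ≤ A i j) {c : ℝ} (hc : 0 < c)
    (h : matrixSpectralRadius A < c) : ∃ u ∈ stdSimplex ℝ n, A.mulVec u ≤ c • u := by
  obtain ⟨N, hN0, hN⟩ := exists_pow_mulVec_one_le hc h
  set w : n → ℝ := ∑ k ∈ Finset.range N, c⁻¹ ^ k • (A ^ k).mulVec 1 with hw
  have hpow (k : ℕ) : 0 ≤ (A ^ k).mulVec 1 := by
    induction k with
    | zero => simp
    | succ k ih =>
      rw [pow_succ', ← Matrix.mulVec_mulVec]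
      exact fun i => Finset.sum_nonneg fun j _ => mul_nonneg (hA i j) (ih j)
  have hw1 : 1 ≤ w := by
    simpa [hw] using Finset.single_le_sum
      (fun k _ => smul_nonneg (pow_nonneg (inv_nonneg.2 hc.le) k) (hpow k)) (Finset.mem_range.2 hN0)
  have hpos (i : n) : 0 < w i := zero_lt_one.trans_le (hw1 i)
  have hsum : 0 < ∑ i, w i := Finset.sum_pos (fun i _ => hpos i) Finset.univ_nonempty
  refine ⟨(∑ i, w i)⁻¹ • w, ⟨fun i => (mul_pos (inv_pos.2 hsum) (hpos i)).le, ?_⟩, ?_⟩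
  · simp only [Pi.smul_apply, smul_eq_mul, ← Finset.mul_sum]
    exact inv_mul_cancel₀ hsum.ne'
  · rw [Matrix.mulVec_smul, smul_comm]
    exact smul_le_smul_of_nonneg_left (mulVec_sum_pow_le hc hN) (inv_pos.2 hsum).le

theorem exists_stdSimplex_mulVec_le [Nonempty n] (hA : ∀ i j, 0 ≤ A i j)
    (h : matrixSpectralRadius A ≤ 1) : ∃ u ∈ stdSimplex ℝ n, A.mulVec u ≤ u := by
  choose u hu hAu using fun m : ℕ => exists_stdSimplex_mulVec_le_smul hA
    (c := 1 + 1 / ((m : ℝ) + 1)) (by positivity)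
    (h.trans_lt (lt_add_of_pos_right 1 Nat.one_div_pos_of_nat))
  obtain ⟨a, ha, φ, hφ, hlim⟩ := (isCompact_stdSimplex ℝ n).tendsto_subseq hu
  refine ⟨a, ha, ?_⟩
  have hleft : Tendsto (fun m => A.mulVec (u (φ m))) atTop (𝓝 (A.mulVec a)) :=
    ((Continuous.matrix_mulVec continuous_const continuous_id).tendsto a).comp hlim
  have hright : Tendsto (fun m => (1 + 1 / ((φ m : ℝ) + 1)) • u (φ m)) atTop
      (𝓝 ((1 + 0 : ℝ) • a)) :=
    ((tendsto_one_div_add_atTop_nhds_zero_nat.comp hφ.tendsto_atTop).const_add 1).smul hlim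
  simpa using le_of_tendsto_of_tendsto' hleft hright fun m => hAu (φ m)

end SpectralRadius

namespace MWGraph

variable {d : ℕ} {V E : Type} [Fintype V] [Fintype E] [DecidableEq V]
  (G : MWGraph d V E)

theorem Amatrix_nonneg (s : ℝ) (i j : V) : 0 ≤ G.Amatrix s i j :=
  Finset.sum_nonneg fun e _ => by
    have := G.r_pos e
    split_ifs <;> positivity

theorem Amatrix_mulVec_apply (s : ℝ) (u : V → ℝ) (i : V) :
    (G.Amatrix s).mulVec u i = ∑ e with G.init e = i, G.r e ^ s * u (G.term e) := by
  simp only [Amatrix, Matrix.mulVec, dotProduct, Matrix.of_apply, Finset.sum_mul]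
  rw [Finset.sum_comm, Finset.sum_filter]
  refine Finset.sum_congr rfl fun e _ => ?_
  by_cases h : G.init e = i <;> simp [h, ite_mul]

variable {G} {s : ℝ} {u : V → ℝ}

theorem pos_of_isPathFrom (hu : 0 ≤ u) (hGu : (G.Amatrix s).mulVec u ≤ u) {i : V} {γ : List E}
    (hγ : G.IsPathFrom i γ) (hpos : 0 < u (G.pathTerm i γ)) : 0 < u i := by
  induction γ generalizing i with
  | nil => exact hpos
  | cons e γ ih =>
    obtain ⟨rfl, hγ⟩ := hγ
    calc 0 < G.r e ^ s * u (G.term e) :=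
          mul_pos (Real.rpow_pos_of_pos (G.r_pos e) s) (ih hγ hpos)
      _ ≤ ∑ e' with G.init e' = G.init e, G.r e' ^ s * u (G.term e') :=
          Finset.single_le_sum (f := fun e' => G.r e' ^ s * u (G.term e'))
            (fun e' _ => mul_nonneg (Real.rpow_nonneg (G.r_pos e').le s) (hu _)) (by simp)
      _ = (G.Amatrix s).mulVec u (G.init e) := (G.Amatrix_mulVec_apply s u _).symm
      _ ≤ u (G.init e) := hGu _

theorem exists_pos_mulVec_Amatrix_le (hSC : G.StronglyConnected)
    (hs : matrixSpectralRadius (G.Amatrix s) ≤ 1) :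
    ∃ v : V → ℝ, (∀ i, 0 < v i) ∧ (G.Amatrix s).mulVec v ≤ v := by
  cases isEmpty_or_nonempty V
  · exact ⟨1, isEmptyElim, fun i => isEmptyElim i⟩
  obtain ⟨u, ⟨hu0, hu1⟩, hu⟩ := exists_stdSimplex_mulVec_le (G.Amatrix_nonneg s) hs
  obtain ⟨j, -, hj⟩ : ∃ j ∈ Finset.univ, 0 < u j :=
    Finset.exists_lt_of_sum_lt (by simp [hu1])
  refine ⟨u, fun i => ?_, hu⟩
  obtain ⟨γ, -, hγ, rfl⟩ := hSC i j
  exact pos_of_isPathFrom hu0 hu hγ hj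

end MWGraph

/-! ### Bounded unit sums -/

/-- Boundedness of the sums of `f` over finite arithmetic progressions `x, x - 1, …, x - m + 1`,
uniformly in `x` and `m`: the discrete form of direct Riemann integrability used here in place of
integrability, because it passes to suprema over unit intervals. -/
def BoundedUnitSums (f : ℝ → ℝ) : Prop :=
  ∃ B, ∀ x (m : ℕ), ∑ k ∈ Finset.range m, f (x - k) ≤ B

namespace BoundedUnitSums

variable {f g : ℝ → ℝ}

theorem add (hf : BoundedUnitSums f) (hg : BoundedUnitSums g) :
    BoundedUnitSums fun t => f t + g t := by
  obtain ⟨B, hB⟩ := hf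
  obtain ⟨B', hB'⟩ := hg
  exact ⟨B + B', fun x m => Finset.sum_add_distrib.trans_le (add_le_add (hB x m) (hB' x m))⟩

theorem const_mul {c : ℝ} (hc : 0 ≤ c) (hf : BoundedUnitSums f) :
    BoundedUnitSums fun t => c * f t := by
  obtain ⟨B, hB⟩ := hf
  exact ⟨c * B, fun x m => by
    simpa only [Finset.mul_sum] using mul_le_mul_of_nonneg_left (hB x m) hc⟩

theorem comp_add_right (hf : BoundedUnitSums f) (a : ℝ) : BoundedUnitSums fun t => f (t + a) := by
  obtain ⟨B, hB⟩ := hf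
  exact ⟨B, fun x m => by simpa only [sub_add_eq_add_sub] using hB (x + a) m⟩

theorem sum {ι : Type*} {I : Finset ι} {F : ι → ℝ → ℝ} (hF : ∀ i ∈ I, BoundedUnitSums (F i)) :
    BoundedUnitSums fun t => ∑ i ∈ I, F i t := by
  choose! B hB using hF
  refine ⟨∑ i ∈ I, B i, fun x m => ?_⟩
  rw [Finset.sum_comm]
  exact Finset.sum_le_sum fun i hi => hB i hi x m

theorem summable_sSup (hf : BoundedUnitSums f) {φ : ℝ → ℝ} (hφ0 : ∀ t, 0 ≤ φ t)
    (hφf : ∀ k : ℕ, ∀ t ∈ Icc (k : ℝ) (k + 1), φ t ≤ f (k + 1)) :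
    Summable fun k : ℕ => sSup {x | ∃ t ∈ Icc (k : ℝ) (k + 1), x = φ t} := by
  obtain ⟨B, hB⟩ := hf
  have hf0 (k : ℕ) : 0 ≤ f (k + 1) := (hφ0 k).trans (hφf k k ⟨le_rfl, by linarith⟩)
  have hsummable : Summable fun k : ℕ => f (k + 1) := by
    refine summable_of_sum_range_le (c := B) hf0 fun m => ?_
    rw [← Finset.sum_range_reflect]
    convert hB m m using 3 with k hk
    have := Finset.mem_range.1 hk
    rw [Nat.sub_sub, Nat.cast_sub (by lia)]
    push_cast
    ring
  refine hsummable.of_nonneg_of_le (fun k => Real.sSup_nonneg ?_)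
    (fun k => Real.sSup_le ?_ (hf0 k))
  · rintro _ ⟨t, -, rfl⟩
    exact hφ0 t
  · rintro _ ⟨t, ht, rfl⟩
    exact hφf k t ht

variable {q : ℝ → ℝ} {c : ℝ}

theorem ofReal_indicator_Ici_le_lintegral (hc : 0 ≤ c)
    (hle : ∀ t, 0 ≤ t → ∀ u ∈ Ioo t (t + 1), q t ≤ c * q u) (t : ℝ) :
    ENNReal.ofReal ((Ici 0).indicator q t) ≤
      ∫⁻ u in Ioo t (t + 1) ∩ Ioi 0, ENNReal.ofReal c * ENNReal.ofReal (q u) := by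
  by_cases ht : 0 ≤ t
  · rw [indicator_of_mem (mem_Ici.2 ht),
      inter_eq_left.2 (Ioo_subset_Ioi_self.trans (Ioi_subset_Ioi ht))]
    calc ENNReal.ofReal (q t) = ∫⁻ _ in Ioo t (t + 1), ENNReal.ofReal (q t) := by simp
      _ ≤ ∫⁻ u in Ioo t (t + 1), ENNReal.ofReal c * ENNReal.ofReal (q u) :=
          setLIntegral_mono' measurableSet_Ioo fun u hu => by
            rw [← ENNReal.ofReal_mul hc]
            exact ENNReal.ofReal_le_ofReal (hle t ht u hu)
  · simp [ht]

theorem of_lintegral_lt_top (hq0 : ∀ t, 0 ≤ q t) (hc : 0 ≤ c)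
    (hle : ∀ t, 0 ≤ t → ∀ u ∈ Ioo t (t + 1), q t ≤ c * q u)
    (hq : ∫⁻ t in Ioi (0 : ℝ), ENNReal.ofReal (q t) < ⊤) :
    BoundedUnitSums ((Ici 0).indicator q) := by
  set J := ∫⁻ t in Ioi (0 : ℝ), ENNReal.ofReal c * ENNReal.ofReal (q t) with hJ
  have hJtop : J ≠ ⊤ := by
    rw [hJ, lintegral_const_mul' _ _ ENNReal.ofReal_ne_top]
    exact ENNReal.mul_ne_top ENNReal.ofReal_ne_top hq.ne
  refine ⟨J.toReal, fun x m => ?_⟩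
  rw [← ENNReal.ofReal_le_iff_le_toReal hJtop,
    ENNReal.ofReal_sum_of_nonneg fun k _ => indicator_nonneg (fun t _ => hq0 t) _]
  let I (k : ℕ) : Set ℝ := Ioo (x - k) (x - k + 1) ∩ Ioi 0
  have hdisj : Set.PairwiseDisjoint (Finset.range m : Set ℕ) I :=
    Pairwise.set_pairwise (fun k l hkl => by
      have := pairwise_disjoint_Ioo_add_intCast x (i := -k) (j := -l) (by simpa using hkl)
      refine Disjoint.mono ?_ ?_ this <;> simp [I, sub_eq_add_neg]) _
  calc ∑ k ∈ Finset.range m, ENNReal.ofReal ((Ici 0).indicator q (x - k))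
      ≤ ∑ k ∈ Finset.range m, ∫⁻ t in I k, ENNReal.ofReal c * ENNReal.ofReal (q t) :=
        Finset.sum_le_sum fun k _ => ofReal_indicator_Ici_le_lintegral hc hle _
    _ = ∫⁻ t in ⋃ k ∈ Finset.range m, I k, ENNReal.ofReal c * ENNReal.ofReal (q t) :=
        (lintegral_biUnion_finset hdisj
          (fun k _ => measurableSet_Ioo.inter measurableSet_Ioi) _).symm
    _ ≤ J := lintegral_mono_set (iUnion₂_subset fun k _ => inter_subset_right)

end BoundedUnitSums

/-! ### Covering numbers -/

section CoveringNumber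

variable {d : ℕ} {A B Z : Set (Pt d)} {r : ℝ}

theorem coveringNumber_le_card {ι : Type*} [Fintype ι] (c : ι → Pt d)
    (h : A ⊆ ⋃ i, closedBall (c i) r) : coveringNumber A r ≤ Fintype.card ι := by
  refine Nat.sInf_le ⟨c ∘ (Fintype.equivFin ι).symm, h.trans_eq ?_⟩
  exact ((Fintype.equivFin ι).symm.surjective.iUnion_comp fun i => closedBall (c i) r).symm

theorem coveringNumber_empty : coveringNumber (∅ : Set (Pt d)) r = 0 := by
  simpa using coveringNumber_le_card (ι := Fin 0) (fun _ => 0) (empty_subset _)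

theorem exists_subset_iUnion_closedBall_coveringNumber (hA : Bornology.IsBounded A) (hr : 0 < r) :
    ∃ c : Fin (coveringNumber A r) → Pt d, A ⊆ ⋃ i, closedBall (c i) r := by
  refine Nat.sInf_mem (s := {k | ∃ c : Fin k → Pt d, A ⊆ ⋃ i, closedBall (c i) r}) ?_
  obtain ⟨t, ht, hAt⟩ := Metric.totallyBounded_iff.1
    (hA.isCompact_closure.totallyBounded.subset subset_closure) r hr
  have := ht.fintype
  refine ⟨Fintype.card t, fun k => (Fintype.equivFin t).symm k, hAt.trans ?_⟩
  rw [(Fintype.equivFin t).symm.surjective.iUnion_comp fun y : t => closedBall (y : Pt d) r,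
    iUnion_coe_set]
  exact iUnion₂_mono fun y _ => ball_subset_closedBall

theorem coveringNumber_le_coveringNumber (hB : Bornology.IsBounded B) (hAB : A ⊆ B) {r' : ℝ}
    (hr : 0 < r) (hrr' : r ≤ r') : coveringNumber A r' ≤ coveringNumber B r := by
  obtain ⟨c, hc⟩ := exists_subset_iUnion_closedBall_coveringNumber hB hr
  simpa using coveringNumber_le_card c
    (hAB.trans (hc.trans (iUnion_mono fun i => closedBall_subset_closedBall hrr')))

theorem coveringNumber_image_le (hA : Bornology.IsBounded A) {K : NNReal} {f : Pt d → Pt d}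
    (hf : LipschitzWith K f) (hr : 0 < r) :
    coveringNumber (f '' A) (K * r) ≤ coveringNumber A r := by
  obtain ⟨c, hc⟩ := exists_subset_iUnion_closedBall_coveringNumber hA hr
  simpa using coveringNumber_le_card (f ∘ c) (image_subset_iff.2 fun x hx => by
    obtain ⟨i, hi⟩ := mem_iUnion.1 (hc hx)
    exact mem_iUnion.2 ⟨i, hf.mapsTo_closedBall _ _ hi⟩)

theorem coveringNumber_le_card_add {ι : Type*} (I : Finset ι) (c : ι → Pt d)
    (hB : Bornology.IsBounded B) (hr : 0 < r) (h : A ⊆ (⋃ i ∈ I, closedBall (c i) r) ∪ B) :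
    coveringNumber A r ≤ I.card + coveringNumber B r := by
  obtain ⟨c', hc'⟩ := exists_subset_iUnion_closedBall_coveringNumber hB hr
  have := coveringNumber_le_card (A := A) (r := r) (Sum.elim (fun i : I => c i) c') (by
    rw [iUnion_sum]
    exact h.trans (union_subset_union (iUnion₂_subset fun i hi =>
      subset_iUnion (fun k : I => closedBall (c k) r) ⟨i, hi⟩) hc'))
  simpa using this

theorem coveringNumber_union_le (hA : Bornology.IsBounded A) (hB : Bornology.IsBounded B)
    (hr : 0 < r) : coveringNumber (A ∪ B) r ≤ coveringNumber A r + coveringNumber B r := by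
  obtain ⟨c, hc⟩ := exists_subset_iUnion_closedBall_coveringNumber hA hr
  simpa using coveringNumber_le_card_add Finset.univ c hB hr
    (union_subset_union_left B (by simpa using hc))

theorem coveringNumber_biUnion_le {ι : Type*} {I : Finset ι} {T : ι → Set (Pt d)}
    (hT : ∀ i ∈ I, Bornology.IsBounded (T i)) (hr : 0 < r) :
    coveringNumber (⋃ i ∈ I, T i) r ≤ ∑ i ∈ I, coveringNumber (T i) r := by
  classical
  induction I using Finset.induction_on with
  | empty => simp [coveringNumber_empty]
  | insert a I ha ih =>
    rw [Finset.forall_mem_insert] at hT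
    rw [Finset.set_biUnion_insert, Finset.sum_insert ha]
    refine (coveringNumber_union_le hT.1 ?_ hr).trans (by gcongr; exact ih hT.2)
    exact (Bornology.isBounded_biUnion I.finite_toSet).2 hT.2

-- In an optimal cover of `Z`, a ball meeting `T i` and some other `T j` meets `T i` only near the
-- complement of `W i`; the balls meeting a single `T i` are counted once.
theorem sum_coveringNumber_le {ι : Type*} {I : Finset ι} {T W : ι → Set (Pt d)}
    (hZ : Bornology.IsBounded Z) (hTZ : ∀ i ∈ I, T i ⊆ Z)
    (hTW : ∀ i ∈ I, ∀ j ∈ I, i ≠ j → Disjoint (T j) (W i)) {r' : ℝ} (hr : 0 < r)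
    (hrr' : 2 * r < r') :
    ∑ i ∈ I, coveringNumber (T i) r ≤
      coveringNumber Z r + ∑ i ∈ I, coveringNumber (T i ∩ thickening r' (W i)ᶜ) r := by
  classical
  obtain ⟨c, hc⟩ := exists_subset_iUnion_closedBall_coveringNumber hZ hr
  let meets (k : Fin (coveringNumber Z r)) (i : ι) : Prop := (closedBall (c k) r ∩ T i).Nonempty
  let P (i : ι) : Finset (Fin (coveringNumber Z r)) :=
    {k | meets k i ∧ ∀ j ∈ I, meets k j → j = i}
  have hcover (i : ι) (hi : i ∈ I) :
      T i ⊆ (⋃ k ∈ P i, closedBall (c k) r) ∪ (T i ∩ thickening r' (W i)ᶜ) := by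
    intro x hx
    obtain ⟨k, hk⟩ := mem_iUnion.1 (hc (hTZ i hi hx))
    by_cases hkP : k ∈ P i
    · exact Or.inl (mem_biUnion hkP hk)
    · have hmeet : meets k i := ⟨x, hk, hx⟩
      simp only [P, Finset.mem_filter, Finset.mem_univ, true_and, hmeet, not_forall] at hkP
      obtain ⟨j, hj, ⟨y, hyk, hy⟩, hji⟩ := hkP
      have hyW : y ∈ (W i)ᶜ := disjoint_left.1 (hTW i hi j hj (Ne.symm hji)) hy
      refine Or.inr ⟨hx, mem_thickening_iff.2 ⟨y, hyW, ?_⟩⟩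
      calc dist x y ≤ dist x (c k) + dist y (c k) := dist_triangle_right x y (c k)
        _ ≤ r + r := add_le_add hk hyk
        _ < r' := by rwa [← two_mul]
  have hdisj : (I : Set ι).PairwiseDisjoint P := fun i hi j _ hij =>
    Finset.disjoint_left.2 fun k hki hkj => by
      simp only [P, Finset.mem_filter, Finset.mem_univ, true_and] at hki hkj
      exact hij (hkj.2 i hi hki.1)
  calc ∑ i ∈ I, coveringNumber (T i) r
      ≤ ∑ i ∈ I, ((P i).card + coveringNumber (T i ∩ thickening r' (W i)ᶜ) r) :=
        Finset.sum_le_sum fun i hi => coveringNumber_le_card_add (P i) c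
          (hZ.subset (inter_subset_left.trans (hTZ i hi))) hr (hcover i hi)
    _ = (I.biUnion P).card + ∑ i ∈ I, coveringNumber (T i ∩ thickening r' (W i)ᶜ) r := by
        rw [Finset.sum_add_distrib, Finset.card_biUnion hdisj]
    _ ≤ _ := by
        gcongr
        simpa using Finset.card_le_univ (I.biUnion P)

end CoveringNumber

/-! ### Boundary layers -/

section Similarity

variable {X Y : Type*} [MetricSpace X] [MetricSpace Y] {f : X → Y} {r : ℝ}

theorem lipschitzWith_of_dist_eq_mul (hr : 0 ≤ r) (hf : ∀ x y, dist (f x) (f y) = r * dist x y) :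
    LipschitzWith r.toNNReal f :=
  LipschitzWith.of_dist_le_mul fun x y => by rw [hf, Real.coe_toNNReal r hr]

theorem injective_of_dist_eq_mul (hr : 0 < r) (hf : ∀ x y, dist (f x) (f y) = r * dist x y) :
    Function.Injective f := fun x y hxy => by
  simpa [hr.ne', hxy, eq_comm] using hf x y

theorem image_thickening_of_dist_eq_mul (hr : 0 < r) (hf : ∀ x y, dist (f x) (f y) = r * dist x y)
    (hsurj : Function.Surjective f) (δ : ℝ) (A : Set X) :
    f '' thickening δ A = thickening (r * δ) (f '' A) := by
  ext y
  obtain ⟨x, rfl⟩ := hsurj y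
  rw [(injective_of_dist_eq_mul hr hf).mem_set_image]
  simp only [mem_thickening_iff, exists_mem_image, hf, mul_lt_mul_iff_right₀ hr]

theorem surjective_of_dist_eq_mul {F : Type*} [NormedAddCommGroup F] [NormedSpace ℝ F]
    [StrictConvexSpace ℝ F] [FiniteDimensional ℝ F] {f : F → F} (hr : 0 < r)
    (hf : ∀ x y, dist (f x) (f y) = r * dist x y) : Function.Surjective f := by
  have hiso : Isometry fun x => r⁻¹ • f x := Isometry.of_dist_eq fun x y => by
    rw [dist_smul₀, hf, Real.norm_of_nonneg (inv_nonneg.2 hr.le), inv_mul_cancel_left₀ hr.ne']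
  let φ := hiso.affineIsometryOfStrictConvexSpace
  have hφ : Function.Surjective φ.toAffineMap :=
    (AffineMap.linear_surjective_iff _).1 (LinearMap.injective_iff_surjective.1
      ((AffineMap.linear_injective_iff _).2 φ.injective))
  intro y
  obtain ⟨x, hx⟩ := hφ (r⁻¹ • y)
  exact ⟨x, smul_right_injective F (inv_ne_zero hr.ne') hx⟩

theorem isOpenMap_of_dist_eq_mul {F : Type*} [NormedAddCommGroup F] [NormedSpace ℝ F]
    [StrictConvexSpace ℝ F] [FiniteDimensional ℝ F] {f : F → F} (hr : 0 < r)
    (hf : ∀ x y, dist (f x) (f y) = r * dist x y) : IsOpenMap f := by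
  have hanti : AntilipschitzWith r⁻¹.toNNReal f := AntilipschitzWith.of_le_mul_dist fun x y => by
    rw [hf, Real.coe_toNNReal _ (inv_nonneg.2 hr.le), inv_mul_cancel_left₀ hr.ne']
  refine (hanti.isUniformInducing
    (lipschitzWith_of_dist_eq_mul hr.le hf).uniformContinuous).isInducing.isOpenMap ?_
  rw [(surjective_of_dist_eq_mul hr hf).range_eq]
  exact isOpen_univ

end Similarity

/-- The covering number of `A` at scale `e^{-t}`, normalized by the factor `e^{-st}` expected for
sets of dimension `s`. -/
def weightedCoveringNumber {d : ℕ} (s : ℝ) (A : Set (Pt d)) (t : ℝ) : ℝ :=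
  Real.exp (-s * t) * coveringNumber A (Real.exp (-t))

/-- The part of `A` at distance less than `a e^{-t}` from the complement of `W`. -/
def boundaryLayer {d : ℕ} (A W : Set (Pt d)) (a t : ℝ) : Set (Pt d) :=
  A ∩ thickening (a * Real.exp (-t)) Wᶜ

section WeightedCoveringNumber

variable {d : ℕ} {A B W Z : Set (Pt d)} {a r s t : ℝ}

theorem boundaryLayer_subset : boundaryLayer A W a t ⊆ A := inter_subset_left

theorem boundaryLayer_mono {A' W' : Set (Pt d)} (hA : A ⊆ A') (hW : W' ⊆ W) :
    boundaryLayer A W a t ⊆ boundaryLayer A' W' a t :=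
  inter_subset_inter hA (thickening_subset_of_subset _ (compl_subset_compl.2 hW))

theorem boundaryLayer_subset_boundaryLayer_exp_one (ha : 0 ≤ a) {u : ℝ} (hu : u ≤ t + 1) :
    boundaryLayer A W a t ⊆ boundaryLayer A W (a * Real.exp 1) u := by
  refine inter_subset_inter_right A (thickening_mono ?_ _)
  rw [mul_assoc, ← Real.exp_add]
  gcongr
  linarith

theorem exp_neg_add_log (hr : 0 < r) (t : ℝ) :
    Real.exp (-t) = r * Real.exp (-(t + Real.log r)) := by
  rw [neg_add, Real.exp_add, Real.exp_neg (Real.log r), Real.exp_log hr]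
  field_simp

theorem image_boundaryLayer {f : Pt d → Pt d} (hr : 0 < r)
    (hf : ∀ x y, dist (f x) (f y) = r * dist x y) (A W : Set (Pt d)) (a t : ℝ) :
    f '' boundaryLayer A W a (t + Real.log r) = boundaryLayer (f '' A) (f '' W) a t := by
  have hinj := injective_of_dist_eq_mul hr hf
  have hsurj := surjective_of_dist_eq_mul hr hf
  rw [boundaryLayer, boundaryLayer, image_inter hinj, image_thickening_of_dist_eq_mul hr hf hsurj,
    image_compl_eq ⟨hinj, hsurj⟩, exp_neg_add_log hr t, mul_left_comm]

theorem weightedCoveringNumber_nonneg (s : ℝ) (A : Set (Pt d)) (t : ℝ) :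
    0 ≤ weightedCoveringNumber s A t := by
  unfold weightedCoveringNumber
  positivity

theorem weightedCoveringNumber_mono (hB : Bornology.IsBounded B) (hAB : A ⊆ B) :
    weightedCoveringNumber s A t ≤ weightedCoveringNumber s B t := by
  unfold weightedCoveringNumber
  gcongr
  exact coveringNumber_le_coveringNumber hB hAB (Real.exp_pos _) le_rfl

theorem weightedCoveringNumber_le_exp_mul (hs : 0 ≤ s) (hB : Bornology.IsBounded B) (hAB : A ⊆ B)
    {u : ℝ} (htu : t ≤ u) (hut : u ≤ t + 1) :
    weightedCoveringNumber s A t ≤ Real.exp s * weightedCoveringNumber s B u := by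
  unfold weightedCoveringNumber
  rw [← mul_assoc, ← Real.exp_add]
  gcongr
  · nlinarith
  · exact coveringNumber_le_coveringNumber hB hAB (Real.exp_pos _)
      (Real.exp_le_exp.2 (neg_le_neg htu))

theorem exists_weightedCoveringNumber_le_exp_neg (s T : ℝ) (hZ : Bornology.IsBounded Z) :
    ∃ M, 0 ≤ M ∧ ∀ A ⊆ Z, ∀ t ∈ Icc 0 T, weightedCoveringNumber s A t ≤ M * Real.exp (-t) := by
  set N : ℝ := coveringNumber Z (Real.exp (-T))
  refine ⟨Real.exp (|s| * T) * N * Real.exp T, by positivity, fun A hA t ht => ?_⟩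
  have hN : (coveringNumber A (Real.exp (-t)) : ℝ) ≤ N :=
    Nat.cast_le.2 (coveringNumber_le_coveringNumber hZ hA (Real.exp_pos _)
      (Real.exp_le_exp.2 (neg_le_neg ht.2)))
  calc weightedCoveringNumber s A t ≤ Real.exp (|s| * T) * N := by
        refine mul_le_mul (Real.exp_le_exp.2 ?_) hN (Nat.cast_nonneg _) (Real.exp_nonneg _)
        exact mul_le_mul (neg_le_abs s) ht.2 ht.1 (abs_nonneg s)
    _ ≤ Real.exp (|s| * T) * N * (Real.exp T * Real.exp (-t)) := by
        refine le_mul_of_one_le_right (by positivity) ?_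
        rw [← Real.exp_add]
        exact Real.one_le_exp (by linarith [ht.2])
    _ = Real.exp (|s| * T) * N * Real.exp T * Real.exp (-t) := by ring

theorem weightedCoveringNumber_image_le {f : Pt d → Pt d} (hr : 0 < r)
    (hf : ∀ x y, dist (f x) (f y) = r * dist x y) (hA : Bornology.IsBounded A) :
    weightedCoveringNumber s (f '' A) t ≤ r ^ s * weightedCoveringNumber s A (t + Real.log r) := by
  have hexp : Real.exp (-s * t) = r ^ s * Real.exp (-s * (t + Real.log r)) := by
    rw [Real.rpow_def_of_pos hr, ← Real.exp_add]
    ring_nf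
  have himage := coveringNumber_image_le hA (lipschitzWith_of_dist_eq_mul hr.le hf)
    (Real.exp_pos (-(t + Real.log r)))
  rw [Real.coe_toNNReal r hr.le, ← exp_neg_add_log hr] at himage
  unfold weightedCoveringNumber
  rw [hexp, mul_assoc]
  gcongr

theorem weightedCoveringNumber_biUnion_union_le {ι : Type*} {I : Finset ι} {T : ι → Set (Pt d)}
    (hT : ∀ i ∈ I, Bornology.IsBounded (T i)) (hB : Bornology.IsBounded B) :
    weightedCoveringNumber s ((⋃ i ∈ I, T i) ∪ B) t ≤
      ∑ i ∈ I, weightedCoveringNumber s (T i) t + weightedCoveringNumber s B t := by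
  have hpos := Real.exp_pos (-t)
  have hunion := (coveringNumber_union_le ((Bornology.isBounded_biUnion I.finite_toSet).2 hT)
    hB hpos).trans (Nat.add_le_add_right (coveringNumber_biUnion_le hT hpos) _)
  simp only [weightedCoveringNumber, ← Finset.mul_sum, ← mul_add]
  gcongr
  exact_mod_cast hunion

theorem abs_sum_weightedCoveringNumber_sub_le {ι : Type*} {I : Finset ι} {T W : ι → Set (Pt d)}
    (hT : ∀ i ∈ I, Bornology.IsBounded (T i)) (hB : Bornology.IsBounded B)
    (hTW : ∀ i ∈ I, ∀ j ∈ I, i ≠ j → Disjoint (T j) (W i)) (ha : 2 < a) :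
    |∑ i ∈ I, weightedCoveringNumber s (T i) t -
        weightedCoveringNumber s ((⋃ i ∈ I, T i) ∪ B) t| ≤
      ∑ i ∈ I, weightedCoveringNumber s (boundaryLayer (T i) (W i) a t) t +
        weightedCoveringNumber s B t := by
  have hlower := weightedCoveringNumber_biUnion_union_le (s := s) (t := t) hT hB
  have hupper : ∑ i ∈ I, weightedCoveringNumber s (T i) t ≤
      weightedCoveringNumber s ((⋃ i ∈ I, T i) ∪ B) t +
        ∑ i ∈ I, weightedCoveringNumber s (boundaryLayer (T i) (W i) a t) t := by
    have hsum := sum_coveringNumber_le (Z := (⋃ i ∈ I, T i) ∪ B)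
      (((Bornology.isBounded_biUnion I.finite_toSet).2 hT).union hB)
      (fun i hi => (subset_biUnion_of_mem (u := T) hi).trans subset_union_left) hTW
      (Real.exp_pos (-t)) ((mul_lt_mul_iff_left₀ (Real.exp_pos _)).2 ha)
    simp only [weightedCoveringNumber, ← Finset.mul_sum, ← mul_add]
    gcongr
    exact_mod_cast hsum
  have hBnonneg := weightedCoveringNumber_nonneg s B t
  have hlayer : 0 ≤ ∑ i ∈ I, weightedCoveringNumber s (boundaryLayer (T i) (W i) a t) t :=
    Finset.sum_nonneg fun i _ => weightedCoveringNumber_nonneg ..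
  rw [abs_le]
  constructor <;> linarith

end WeightedCoveringNumber

/-- The normalized covering number of the `a e^{-t}`-boundary layer of `A` in `W` at scale
`e^{-t}`, cut off at negative times so that renewal inequalities can be solved from the left. -/
def layerWeight {d : ℕ} (s a : ℝ) (A W : Set (Pt d)) : ℝ → ℝ :=
  (Ici 0).indicator fun t => weightedCoveringNumber s (boundaryLayer A W a t) t

/-- The inhomogeneous term of the renewal inequality: the normalized covering number of the
condensation set `A`, and a multiple of `e^{-t}` that dominates every term which is only present at
bounded times. -/
def condensationWeight {d : ℕ} (s N : ℝ) (A : Set (Pt d)) : ℝ → ℝ :=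
  (Ici 0).indicator fun t => weightedCoveringNumber s A t + N * Real.exp (-t)

section Weights

variable {d : ℕ} {A W Z P : Set (Pt d)} {a r s t N : ℝ}

theorem layerWeight_nonneg (s a : ℝ) (A W : Set (Pt d)) (t : ℝ) : 0 ≤ layerWeight s a A W t :=
  indicator_nonneg (fun _ _ => weightedCoveringNumber_nonneg ..) t

theorem layerWeight_of_nonneg (ht : 0 ≤ t) :
    layerWeight s a A W t = weightedCoveringNumber s (boundaryLayer A W a t) t :=
  indicator_of_mem (mem_Ici.2 ht) _

theorem layerWeight_of_neg (ht : t < 0) : layerWeight s a A W t = 0 :=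
  indicator_of_notMem (notMem_Ici.2 ht) _

theorem layerWeight_empty : layerWeight s a (∅ : Set (Pt d)) W t = 0 := by
  rcases lt_or_ge t 0 with ht | ht
  · exact layerWeight_of_neg ht
  · simp [layerWeight_of_nonneg ht, weightedCoveringNumber, boundaryLayer, coveringNumber_empty]

theorem condensationWeight_nonneg (hN : 0 ≤ N) (A : Set (Pt d)) (t : ℝ) :
    0 ≤ condensationWeight s N A t :=
  indicator_nonneg (fun _ _ => add_nonneg (weightedCoveringNumber_nonneg ..) (by positivity)) t

theorem condensationWeight_of_nonneg (ht : 0 ≤ t) :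
    condensationWeight s N A t = weightedCoveringNumber s A t + N * Real.exp (-t) :=
  indicator_of_mem (mem_Ici.2 ht) _

theorem boundedUnitSums_condensationWeight (hs : 0 ≤ s) (hA : Bornology.IsBounded A) (hN : 0 ≤ N)
    (hint : ∫⁻ t in Ioi (0 : ℝ), ENNReal.ofReal (weightedCoveringNumber s A t) < ⊤) :
    BoundedUnitSums (condensationWeight s N A) := by
  have hcover : BoundedUnitSums ((Ici 0).indicator (weightedCoveringNumber s A)) :=
    .of_lintegral_lt_top (weightedCoveringNumber_nonneg s A) (Real.exp_nonneg s)
      (fun t _ u hu => weightedCoveringNumber_le_exp_mul hs hA subset_rfl hu.1.le hu.2.le) hint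
  have hexp : BoundedUnitSums ((Ici 0).indicator fun t => Real.exp (-t)) :=
    .of_lintegral_lt_top (fun t => Real.exp_nonneg _) (Real.exp_nonneg 1) (fun t _ u hu => by
      rw [← Real.exp_add]
      exact Real.exp_le_exp.2 (by linarith [hu.2])) (integrableOn_exp_neg_Ioi 0).lintegral_lt_top
  convert hcover.add (hexp.const_mul hN) using 2 with t
  by_cases ht : t ∈ Ici (0 : ℝ) <;> simp [condensationWeight, ht]

theorem exists_weightedCoveringNumber_boundaryLayer_image_le {f : Pt d → Pt d} (hr : 0 < r)
    (hf : ∀ x y, dist (f x) (f y) = r * dist x y) (hZ : Bornology.IsBounded Z) (s a : ℝ) :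
    ∃ M, 0 ≤ M ∧ ∀ A ⊆ Z, ∀ W t, 0 ≤ t →
      weightedCoveringNumber s (boundaryLayer (f '' A) (f '' W) a t) t ≤
        r ^ s * layerWeight s a A W (t + Real.log r) + M * Real.exp (-t) := by
  obtain ⟨M, hM0, hM⟩ := exists_weightedCoveringNumber_le_exp_neg s (-Real.log r)
    ((lipschitzWith_of_dist_eq_mul hr.le hf).isBounded_image hZ)
  refine ⟨M, hM0, fun A hA W t ht => ?_⟩
  rcases lt_or_ge (t + Real.log r) 0 with hneg | hnonneg
  · rw [layerWeight_of_neg hneg, mul_zero, zero_add]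
    exact hM _ (boundaryLayer_subset.trans (image_mono hA)) t ⟨ht, by linarith⟩
  · rw [layerWeight_of_nonneg hnonneg, ← image_boundaryLayer hr hf]
    exact (weightedCoveringNumber_image_le hr hf (hZ.subset (boundaryLayer_subset.trans hA))).trans
      (le_add_of_nonneg_right (by positivity))

theorem exists_layerWeight_le_of_disjoint_thickening (hZ : Bornology.IsBounded Z) {ε : ℝ}
    (hε : 0 < ε) (hP : Disjoint P (thickening ε Wᶜ)) (s a : ℝ) :
    ∃ M, ∀ t, layerWeight s a Z W t ≤ layerWeight s a (Z \ P) W t + M * Real.exp (-t) := by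
  obtain ⟨T, hT⟩ : ∃ T, ∀ t ≥ T, a * Real.exp (-t) ≤ ε :=
    eventually_atTop.1 ((by simpa using Real.tendsto_exp_neg_atTop_nhds_zero.const_mul a :
      Tendsto (fun t => a * Real.exp (-t)) atTop (𝓝 0)).eventually_le_const hε)
  obtain ⟨M, hM0, hM⟩ := exists_weightedCoveringNumber_le_exp_neg s T hZ
  refine ⟨M, fun t => ?_⟩
  rcases lt_or_ge t 0 with ht | ht
  · rw [layerWeight_of_neg ht, layerWeight_of_neg ht]
    positivity
  rcases le_total t T with htT | hTt
  · refine le_add_of_nonneg_of_le (layerWeight_nonneg ..) ?_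
    rw [layerWeight_of_nonneg ht]
    exact hM _ boundaryLayer_subset t ⟨ht, htT⟩
  · have hlayer : boundaryLayer Z W a t ⊆ boundaryLayer (Z \ P) W a t := fun z hz =>
      ⟨⟨hz.1, fun hzP => disjoint_left.1 hP hzP (thickening_mono (hT t hTt) _ hz.2)⟩, hz.2⟩
    rw [layerWeight_of_nonneg ht, layerWeight_of_nonneg ht]
    exact (weightedCoveringNumber_mono
      (hZ.subset (boundaryLayer_subset.trans sdiff_subset)) hlayer).trans
      (le_add_of_nonneg_right (by positivity))

end Weights

/-! ### Geometry of the attractors -/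

namespace MWGraph

variable {d : ℕ} {V E : Type} [Fintype V] [Fintype E]

theorem exists_forall_r_le (G : MWGraph d V E) : ∃ q, 0 < q ∧ q < 1 ∧ ∀ e, G.r e ≤ q := by
  rcases isEmpty_or_nonempty E with _ | _
  · exact ⟨1 / 2, by norm_num, by norm_num, isEmptyElim⟩
  · obtain ⟨e, he⟩ := Finite.exists_max G.r
    exact ⟨G.r e, G.r_pos e, G.r_lt_one e, he⟩

theorem pathRatio_pos (G : MWGraph d V E) (δ : List E) : 0 < G.pathRatio δ :=
  List.prod_pos fun x hx => by
    obtain ⟨e, -, rfl⟩ := List.mem_map.1 hx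
    exact G.r_pos e

theorem dist_pathMap (G : MWGraph d V E) (δ : List E) (x y : Pt d) :
    dist (G.pathMap δ x) (G.pathMap δ y) = G.pathRatio δ * dist x y := by
  induction δ with
  | nil => simp [pathMap, pathRatio]
  | cons e δ ih => simp [pathMap, pathRatio, G.S_sim, ih, mul_assoc]

variable {G : MWGraph d V E} {C K KC U : V → Set (Pt d)}

theorem IsInhomAttractor.image_subset (hKC : G.IsInhomAttractor C KC) (e : E) :
    G.S e '' KC (G.term e) ⊆ KC (G.init e) := by
  rw [hKC.2.2 (G.init e)]
  exact subset_union_of_subset_left (subset_biUnion_of_mem (u := fun e => G.S e '' KC (G.term e))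
    (show e ∈ {e' | G.init e' = G.init e} from rfl)) _

theorem IsInhomAttractor.isBounded (hKC : G.IsInhomAttractor C KC) (i : V) :
    Bornology.IsBounded (KC i) := (hKC.1 i).isBounded

theorem IsInhomAttractor.isBounded_condensation (hKC : G.IsInhomAttractor C KC) (i : V) :
    Bornology.IsBounded (C i) :=
  (hKC.isBounded i).subset ((hKC.2.2 i).symm ▸ subset_union_right)

theorem IsOSCWith.image_subset (hU : G.IsOSCWith U) (e : E) :
    G.S e '' U (G.term e) ⊆ U (G.init e) :=
  (subset_biUnion_of_mem (u := fun e => G.S e '' U (G.term e))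
    (show e ∈ {e' | G.init e' = G.init e} from rfl)).trans (hU.2.2.2.2.1 (G.init e))

-- The largest distance from a point of some `KC i` to `F i` is attained, and is shrunk by one step
-- of the construction; hence it vanishes.
theorem IsInhomAttractor.subset_of_isClosed (hKC : G.IsInhomAttractor C KC) {F : V → Set (Pt d)}
    (hF : ∀ i, IsClosed (F i)) (hF0 : ∀ i, (F i).Nonempty) (hCF : ∀ i, C i ⊆ F i)
    (hSF : ∀ e, MapsTo (G.S e) (F (G.term e)) (F (G.init e))) (i : V) : KC i ⊆ F i := by
  choose z hz hmax using fun i => (hKC.1 i).exists_isMaxOn (hKC.2.1 i)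
    (continuous_infDist_pt (F i)).continuousOn
  have : Nonempty V := ⟨i⟩
  obtain ⟨j, hj⟩ := Finite.exists_max fun i => infDist (z i) (F i)
  have hle {i : V} {x : Pt d} (hx : x ∈ KC i) : infDist x (F i) ≤ infDist (z j) (F j) :=
    (hmax i hx).trans (hj i)
  have hzero : infDist (z j) (F j) = 0 := by
    have hzj := hz j
    rw [hKC.2.2 j] at hzj
    rcases hzj with hzS | hzC
    · obtain ⟨e, rfl, w, hw, hwz⟩ := mem_iUnion₂.1 hzS
      obtain ⟨y, hy, hwy⟩ := (hF (G.term e)).exists_infDist_eq_dist (hF0 _) w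
      have hcontract : infDist (z (G.init e)) (F (G.init e)) ≤
          G.r e * infDist (z (G.init e)) (F (G.init e)) :=
        calc infDist (z (G.init e)) (F (G.init e))
            ≤ dist (G.S e w) (G.S e y) := hwz ▸ infDist_le_dist_of_mem (hSF e hy)
          _ = G.r e * infDist w (F (G.term e)) := by rw [G.S_sim, hwy]
          _ ≤ G.r e * infDist (z (G.init e)) (F (G.init e)) :=
              mul_le_mul_of_nonneg_left (hle hw) (G.r_pos e).le
      nlinarith [G.r_lt_one e, infDist_nonneg (x := z (G.init e)) (s := F (G.init e))]
    · exact infDist_zero_of_mem (hCF j hzC)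
  intro x hx
  rw [(hF i).mem_iff_infDist_zero (hF0 i)]
  exact le_antisymm ((hle hx).trans_eq hzero) infDist_nonneg

theorem IsInhomAttractor.subset_closure (hKC : G.IsInhomAttractor C KC) (hU : G.IsOSCWith U)
    (hCU : ∀ i, C i ⊆ closure (U i)) (i : V) : KC i ⊆ closure (U i) :=
  hKC.subset_of_isClosed (fun _ => isClosed_closure) (fun i => (hU.1 i).closure) hCU
    (fun e => (mapsTo_iff_image_subset.2 (hU.image_subset e)).closure
      (lipschitzWith_of_dist_eq_mul (G.r_pos e).le (G.S_sim e)).continuous) i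

theorem disjoint_image_image (hKC : G.IsInhomAttractor C KC) (hU : G.IsOSCWith U)
    (hCU : ∀ i, C i ⊆ closure (U i)) {e e' : E} (hinit : G.init e = G.init e') (hne : e ≠ e') :
    Disjoint (G.S e' '' KC (G.term e')) (G.S e '' U (G.term e)) := by
  have hclosure : G.S e' '' KC (G.term e') ⊆ closure (G.S e' '' U (G.term e')) :=
    (image_mono (hKC.subset_closure hU hCU _)).trans (image_closure_subset_closure_image
      (lipschitzWith_of_dist_eq_mul (G.r_pos e').le (G.S_sim e')).continuous)
  have hopen : IsOpen (G.S e '' U (G.term e)) :=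
    isOpenMap_of_dist_eq_mul (G.r_pos e) (G.S_sim e) _ (hU.2.1 _)
  exact ((hU.2.2.2.2.2 e e' hinit hne).symm.closure_left hopen).mono_left hclosure

theorem IsAttractor.exists_path_pathRatio_le (hK : G.IsAttractor K) {q : ℝ} (hq : ∀ e, G.r e ≤ q)
    (n : ℕ) {i : V} {z : Pt d} (hz : z ∈ K i) :
    ∃ δ, G.IsPathFrom i δ ∧ G.pathRatio δ ≤ q ^ n ∧ z ∈ G.pathMap δ '' K (G.pathTerm i δ) := by
  induction n generalizing i z with
  | zero => exact ⟨[], trivial, by simp [pathRatio], z, hz, rfl⟩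
  | succ n ih =>
    rw [hK.2.2 i] at hz
    obtain ⟨e, he, w, hw, rfl⟩ := mem_iUnion₂.1 hz
    obtain ⟨δ, hδ, hratio, u, hu, rfl⟩ := ih hw
    refine ⟨e :: δ, ⟨he, hδ⟩, ?_, u, hu, rfl⟩
    rw [pow_succ']
    exact mul_le_mul (hq e) hratio (G.pathRatio_pos δ).le ((G.r_pos e).le.trans (hq e))

theorem exists_path_disjoint_thickening_compl (hK : G.IsAttractor K) (hKC : G.IsInhomAttractor C KC)
    (hU : G.IsOSCWith U) (hUK : ∀ i, (U i ∩ K i).Nonempty) (i : V) :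
    ∃ δ, G.IsPathFrom i δ ∧ ∃ ε, 0 < ε ∧
      Disjoint (G.pathMap δ '' KC (G.pathTerm i δ)) (thickening ε (U i)ᶜ) := by
  obtain ⟨q, hq0, hq1, hq⟩ := G.exists_forall_r_le
  set Z := ⋃ j, K j ∪ KC j
  have hZ : Bornology.IsBounded Z := Bornology.isBounded_iUnion.2 fun j =>
    (hK.1 j).isBounded.union (hKC.isBounded j)
  obtain ⟨z, hzU, hzK⟩ := hUK i
  obtain ⟨ε, hε, hball⟩ := Metric.isOpen_iff.1 (hU.2.1 i) z hzU
  obtain ⟨n, hn⟩ : ∃ n : ℕ, q ^ n * diam Z < ε / 2 :=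
    ((by simpa using (tendsto_pow_atTop_nhds_zero_of_lt_one hq0.le hq1).mul_const (diam Z) :
      Tendsto (fun n : ℕ => q ^ n * diam Z) atTop (𝓝 0)).eventually_lt_const (half_pos hε)).exists
  obtain ⟨δ, hδ, hratio, w, hw, rfl⟩ := hK.exists_path_pathRatio_le hq n hzK
  refine ⟨δ, hδ, ε / 2, half_pos hε, disjoint_left.2 ?_⟩
  rintro _ ⟨u, hu, rfl⟩ hmem
  obtain ⟨y, hy, hyu⟩ := mem_thickening_iff.1 hmem
  refine hy (hball ?_)
  calc dist y (G.pathMap δ w)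
      ≤ dist (G.pathMap δ u) y + dist (G.pathMap δ u) (G.pathMap δ w) := dist_triangle_left _ _ _
    _ < ε / 2 + q ^ n * diam Z := by
        refine add_lt_add_of_lt_of_le hyu ?_
        rw [G.dist_pathMap]
        gcongr
        exact dist_le_diam_of_mem hZ (mem_iUnion_of_mem _ (Or.inr hu))
          (mem_iUnion_of_mem _ (Or.inl hw))
    _ < ε := by linarith

end MWGraph

/-! ### Renewal inequalities with defect -/

namespace MWGraph

variable {d : ℕ} {V E : Type} [Fintype V] [Fintype E] [DecidableEq V]

/-- The renewal operator of `G`: the sum of `r_e^s f_e(t + log r_e)` over the edges `e` leaving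
`i`. -/
def edgeSum (G : MWGraph d V E) (s : ℝ) (f : E → ℝ → ℝ) (i : V) (t : ℝ) : ℝ :=
  ∑ e with G.init e = i, G.r e ^ s * f e (t + Real.log (G.r e))

/-- The renewal operator iterated along a path: `f` is summed over the edges which branch off the
path, `h` over the vertices where they do, and the end of the path itself contributes nothing. -/
def branchSum [DecidableEq E] (G : MWGraph d V E) (s : ℝ) (f h : V → ℝ → ℝ) : List E → ℝ → ℝ
  | [], _ => 0
  | e :: δ, t =>
    G.edgeSum s (Function.update (fun e' => f (G.term e')) e (G.branchSum s f h δ)) (G.init e) t +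
      h (G.init e) t

section Renewal

variable {G : MWGraph d V E} {s : ℝ} {f g : E → ℝ → ℝ} {i : V} {t : ℝ}

theorem edgeSum_le_edgeSum (hfg : ∀ e, G.init e = i →
    f e (t + Real.log (G.r e)) ≤ g e (t + Real.log (G.r e))) :
    G.edgeSum s f i t ≤ G.edgeSum s g i t :=
  Finset.sum_le_sum fun e he =>
    mul_le_mul_of_nonneg_left (hfg e (Finset.mem_filter.1 he).2) (Real.rpow_nonneg (G.r_pos e).le s)

theorem edgeSum_nonneg (hf : ∀ e t, 0 ≤ f e t) (i : V) (t : ℝ) : 0 ≤ G.edgeSum s f i t :=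
  Finset.sum_nonneg fun e _ => mul_nonneg (Real.rpow_nonneg (G.r_pos e).le s) (hf e _)

theorem boundedUnitSums_edgeSum (hf : ∀ e, BoundedUnitSums (f e)) (i : V) :
    BoundedUnitSums (G.edgeSum s f i) :=
  .sum fun e _ => ((hf e).comp_add_right _).const_mul (Real.rpow_nonneg (G.r_pos e).le s)

theorem sum_edgeSum_sub (s : ℝ) (f : E → ℝ → ℝ) (i : V) (x : ℝ) (m : ℕ) :
    ∑ k ∈ Finset.range m, G.edgeSum s f i (x - k) =
      G.edgeSum s (fun e t => ∑ k ∈ Finset.range m, f e (t - k)) i x := by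
  simp only [edgeSum, Finset.mul_sum, sub_add_eq_add_sub]
  exact Finset.sum_comm

variable [DecidableEq E] {F h : V → ℝ → ℝ}

theorem sum_branchSum_sub (s : ℝ) (F h : V → ℝ → ℝ) (δ : List E) (x : ℝ) (m : ℕ) :
    ∑ k ∈ Finset.range m, G.branchSum s F h δ (x - k) =
      G.branchSum s (fun i t => ∑ k ∈ Finset.range m, F i (t - k))
        (fun i t => ∑ k ∈ Finset.range m, h i (t - k)) δ x := by
  induction δ generalizing x with
  | nil => simp [branchSum]
  | cons e δ ih =>
    simp only [branchSum, Finset.sum_add_distrib, sum_edgeSum_sub]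
    congr 2
    ext e' t
    rcases eq_or_ne e' e with rfl | he'
    · simp [ih]
    · simp [he']

variable {v : V → ℝ} {B H : ℝ}

-- Since `v` is subinvariant, each step along the path preserves the bound `B v`, and the missing
-- contribution of the end of the path is a definite saving.
theorem branchSum_le (hs : 0 ≤ s) (hv : (G.Amatrix s).mulVec v ≤ v) (hB : 0 ≤ B) (hH : 0 ≤ H)
    (hh : ∀ i t, h i t ≤ H) {c x : ℝ} (hc : ∀ e, c ≤ -Real.log (G.r e))
    (hF : ∀ i, ∀ t ≤ x - c, F i t ≤ B * v i) {j : V} {δ : List E} (hδ : G.IsPathFrom j δ)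
    {y : ℝ} (hy : y ≤ x) :
    G.branchSum s F h δ y ≤
      B * (v j - G.pathRatio δ ^ s * v (G.pathTerm j δ)) + δ.length * H := by
  induction δ generalizing j y with
  | nil => simp [branchSum, pathRatio, pathTerm]
  | cons e δ ih =>
    obtain ⟨rfl, hδ⟩ := hδ
    set D := B * (G.pathRatio δ ^ s * v (G.pathTerm (G.term e) δ)) - δ.length * H with hD
    have hbranch (e' : E) :
        Function.update (fun e' => F (G.term e')) e (G.branchSum s F h δ) e'
          (y + Real.log (G.r e')) ≤ B * v (G.term e') - Pi.single (M := fun _ => ℝ) e D e' := by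
      rcases eq_or_ne e' e with rfl | he'
      · have := ih hδ (y := y + Real.log (G.r e'))
          (by linarith [Real.log_neg (G.r_pos e') (G.r_lt_one e')])
        simp only [Function.update_self, Pi.single_eq_same]
        linarith
      · simpa [he'] using hF _ _ (by linarith [hc e'])
    have hre : G.r e ^ s ≤ 1 := Real.rpow_le_one (G.r_pos e).le (G.r_lt_one e).le hs
    calc G.branchSum s F h (e :: δ) y
        ≤ G.edgeSum s (fun e' _ => B * v (G.term e') - Pi.single (M := fun _ => ℝ) e D e')
            (G.init e) y + H :=
          add_le_add (edgeSum_le_edgeSum fun e' _ => hbranch e') (hh _ _)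
      _ = B * (G.Amatrix s).mulVec v (G.init e) - G.r e ^ s * D + H := by
          simp [edgeSum, Amatrix_mulVec_apply, mul_sub, Finset.mul_sum, Pi.single_apply,
            mul_left_comm]
      _ ≤ B * v (G.init e) - G.r e ^ s * D + H := by
          gcongr
          exact hv _
      _ ≤ B * v (G.init e) -
            B * ((G.r e ^ s * G.pathRatio δ ^ s) * v (G.pathTerm (G.term e) δ)) +
            (δ.length + 1) * H := by
          have : G.r e ^ s * (δ.length * H) ≤ δ.length * H :=
            mul_le_of_le_one_left (by positivity) hre
          rw [hD]
          linarith
      _ = _ := by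
          rw [← Real.mul_rpow (G.r_pos e).le (G.pathRatio_pos δ).le]
          simp [pathRatio, pathTerm, mul_sub]

variable {γ : V → List E}

theorem le_mul_of_le_branchSum (hs : 0 ≤ s) (hv0 : ∀ i, 0 < v i) (hv : (G.Amatrix s).mulVec v ≤ v)
    (hγ : ∀ i, G.IsPathFrom i (γ i)) (hB : 0 ≤ B) (hH : 0 ≤ H) (hh : ∀ i t, h i t ≤ H)
    (hBH : ∀ i, ((γ i).length + 1) * H ≤
      B * (G.pathRatio (γ i) ^ s * v (G.pathTerm i (γ i))))
    (hneg : ∀ i, ∀ t < 0, F i t ≤ 0)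
    (hF : ∀ i t, F i t ≤ G.branchSum s F h (γ i) t + h i t) (i : V) (t : ℝ) : F i t ≤ B * v i := by
  obtain ⟨q, hq0, hq1, hq⟩ := G.exists_forall_r_le
  have hc0 : 0 < -Real.log q := neg_pos.2 (Real.log_neg hq0 hq1)
  have hc (e : E) : -Real.log q ≤ -Real.log (G.r e) :=
    neg_le_neg (Real.log_le_log (G.r_pos e) (hq e))
  have hwindow (n : ℕ) : ∀ i, ∀ t < n * -Real.log q, F i t ≤ B * v i := by
    induction n with
    | zero =>
      intro i t ht
      exact (hneg i t (by simpa using ht)).trans (mul_nonneg hB (hv0 i).le)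
    | succ n ih =>
      intro i t ht
      push_cast at ht
      calc F i t ≤ G.branchSum s F h (γ i) t + h i t := hF i t
        _ ≤ B * (v i - G.pathRatio (γ i) ^ s * v (G.pathTerm i (γ i))) + (γ i).length * H + H := by
          gcongr
          · exact branchSum_le hs hv hB hH hh hc (fun j y hy => ih j y (by linarith)) (hγ i) le_rfl
          · exact hh i t
        _ ≤ B * v i := by linarith [hBH i]
  obtain ⟨n, hn⟩ := exists_nat_gt (t / -Real.log q)
  exact hwindow n i t ((div_lt_iff₀ hc0).1 hn)

theorem boundedUnitSums_of_le_branchSum (hs : 0 ≤ s) (hv0 : ∀ i, 0 < v i)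
    (hv : (G.Amatrix s).mulVec v ≤ v) (hγ : ∀ i, G.IsPathFrom i (γ i))
    (hneg : ∀ i, ∀ t < 0, F i t ≤ 0) (hF : ∀ i t, F i t ≤ G.branchSum s F h (γ i) t + h i t)
    (hh : ∀ i, BoundedUnitSums (h i)) (i : V) : BoundedUnitSums (F i) := by
  choose H hH using hh
  obtain ⟨H', hH'⟩ := (Set.finite_range H).bddAbove
  set M := max H' 0
  have hM (i : V) : H i ≤ M := (hH' (mem_range_self i)).trans (le_max_left _ _)
  have hend (i : V) : 0 < G.pathRatio (γ i) ^ s * v (G.pathTerm i (γ i)) :=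
    mul_pos (Real.rpow_pos_of_pos (G.pathRatio_pos _) s) (hv0 _)
  obtain ⟨B, hB0, hB⟩ : ∃ B, 0 ≤ B ∧ ∀ i, ((γ i).length + 1) * M ≤
      B * (G.pathRatio (γ i) ^ s * v (G.pathTerm i (γ i))) :=
    ((eventually_ge_atTop 0).and (eventually_all.2 fun i =>
      (tendsto_id.atTop_mul_const (hend i)).eventually_ge_atTop _)).exists
  refine ⟨B * v i, fun x m => ?_⟩
  refine le_mul_of_le_branchSum (F := fun i t => ∑ k ∈ Finset.range m, F i (t - k))
    (h := fun i t => ∑ k ∈ Finset.range m, h i (t - k)) hs hv0 hv hγ hB0 (le_max_right _ _)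
    (fun i t => (hH i t m).trans (hM i)) hB (fun i t ht => ?_) (fun i t => ?_) i x
  · exact Finset.sum_nonpos fun k _ => hneg i _ (by linarith [k.cast_nonneg (α := ℝ)])
  · rw [← sum_branchSum_sub, ← Finset.sum_add_distrib]
    exact Finset.sum_le_sum fun k _ => hF i _

end Renewal

end MWGraph

/-! ### Boundary layers of the attractors -/

namespace MWGraph

variable {d : ℕ} {V E : Type} [Fintype V] [Fintype E] [DecidableEq V] {G : MWGraph d V E}
  {C K KC U : V → Set (Pt d)} {s t : ℝ}

theorem IsInhomAttractor.eq_biUnion_filter_union (hKC : G.IsInhomAttractor C KC) (i : V) :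
    KC i = (⋃ e ∈ ({e | G.init e = i} : Finset E), G.S e '' KC (G.term e)) ∪ C i := by
  simpa only [Finset.mem_filter_univ, mem_ofPred_eq] using hKC.2.2 i

theorem IsInhomAttractor.sdiff_image_subset [DecidableEq E] (hKC : G.IsInhomAttractor C KC) (e : E)
    (P : Set (Pt d)) :
    KC (G.init e) \ G.S e '' P ⊆
      (⋃ e' ∈ ({e' | G.init e' = G.init e} : Finset E), G.S e' ''
        Function.update (fun e' => KC (G.term e')) e (KC (G.term e) \ P) e') ∪ C (G.init e) := by
  rintro z ⟨hz, hzP⟩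
  rw [hKC.eq_biUnion_filter_union] at hz
  refine hz.imp (fun hzS => ?_) id
  obtain ⟨e', he', w, hw, rfl⟩ := mem_iUnion₂.1 hzS
  refine mem_iUnion₂.2 ⟨e', he', mem_image_of_mem _ ?_⟩
  rcases eq_or_ne e' e with rfl | hne
  · simpa [hw] using fun hwP => hzP (mem_image_of_mem _ hwP)
  · simpa [hne] using hw

theorem eventually_sum_boundaryLayer_image_le (hKC : G.IsInhomAttractor C KC) (s a : ℝ) :
    ∀ᶠ N in atTop, ∀ (i : V) (A W : E → Set (Pt d)), (∀ e, A e ⊆ KC (G.term e)) → ∀ t, 0 ≤ t →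
      ∑ e with G.init e = i,
          weightedCoveringNumber s (boundaryLayer (G.S e '' A e) (G.S e '' W e) a t) t +
        weightedCoveringNumber s (C i) t ≤
      G.edgeSum s (fun e => layerWeight s a (A e) (W e)) i t + condensationWeight s N (C i) t := by
  choose M hM0 hM using fun e => exists_weightedCoveringNumber_boundaryLayer_image_le
    (G.r_pos e) (G.S_sim e) (hKC.isBounded (G.term e)) s a
  filter_upwards [eventually_ge_atTop (∑ e, M e)] with N hN i A W hA t ht
  have hMN : ∑ e with G.init e = i, M e * Real.exp (-t) ≤ N * Real.exp (-t) := by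
    rw [← Finset.sum_mul]
    gcongr
    exact (Finset.sum_le_univ_sum_of_nonneg hM0).trans hN
  have hsum := Finset.sum_le_sum fun e (_ : e ∈ ({e | G.init e = i} : Finset E)) =>
    hM e (A e) (hA e) (W e) t ht
  rw [Finset.sum_add_distrib] at hsum
  rw [condensationWeight_of_nonneg ht, edgeSum]
  linarith

theorem eventually_layerWeight_le_edgeSum (hKC : G.IsInhomAttractor C KC) (hU : G.IsOSCWith U)
    (s a : ℝ) :
    ∀ᶠ N in atTop, ∀ (i : V) (A : E → Set (Pt d)) (B : Set (Pt d)),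
      (∀ e, A e ⊆ KC (G.term e)) →
      B ⊆ (⋃ e ∈ ({e | G.init e = i} : Finset E), G.S e '' A e) ∪ C i → ∀ t,
      layerWeight s a B (U i) t ≤
        G.edgeSum s (fun e => layerWeight s a (A e) (U (G.term e))) i t +
          condensationWeight s N (C i) t := by
  filter_upwards [eventually_sum_boundaryLayer_image_le hKC s a, eventually_ge_atTop 0]
    with N hN hN0 i A B hA hB t
  rcases lt_or_ge t 0 with ht | ht
  · rw [layerWeight_of_neg ht]
    exact add_nonneg (edgeSum_nonneg (fun _ _ => layerWeight_nonneg ..) i t)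
      (condensationWeight_nonneg hN0 _ t)
  set L := fun e => boundaryLayer (G.S e '' A e) (G.S e '' U (G.term e)) a t
  have hL (e : E) : Bornology.IsBounded (L e) :=
    (hKC.isBounded _).subset
      ((boundaryLayer_subset.trans (image_mono (hA e))).trans (hKC.image_subset e))
  have hlayer : boundaryLayer B (U i) a t ⊆
      (⋃ e ∈ ({e | G.init e = i} : Finset E), L e) ∪ C i := by
    intro z hz
    refine (hB hz.1).imp (fun hzA => ?_) id
    obtain ⟨e, he, hze⟩ := mem_iUnion₂.1 hzA
    obtain rfl : G.init e = i := (Finset.mem_filter.1 he).2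
    exact mem_iUnion₂.2 ⟨e, he, boundaryLayer_mono subset_rfl (hU.image_subset e) ⟨hze, hz.2⟩⟩
  rw [layerWeight_of_nonneg ht]
  calc weightedCoveringNumber s (boundaryLayer B (U i) a t) t
      ≤ weightedCoveringNumber s ((⋃ e ∈ ({e | G.init e = i} : Finset E), L e) ∪ C i) t :=
        weightedCoveringNumber_mono (((Bornology.isBounded_biUnion (Finset.finite_toSet _)).2
          fun e _ => hL e).union (hKC.isBounded_condensation i)) hlayer
    _ ≤ ∑ e with G.init e = i, weightedCoveringNumber s (L e) t +
          weightedCoveringNumber s (C i) t :=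
        weightedCoveringNumber_biUnion_union_le (fun e _ => hL e) (hKC.isBounded_condensation i)
    _ ≤ _ := hN i A (fun e => U (G.term e)) hA t ht

theorem eventually_layerWeight_sdiff_le_branchSum [DecidableEq E] (hKC : G.IsInhomAttractor C KC)
    (hU : G.IsOSCWith U) (s a : ℝ) :
    ∀ᶠ N in atTop, ∀ (δ : List E) (i : V), G.IsPathFrom i δ → ∀ t,
      layerWeight s a (KC i \ G.pathMap δ '' KC (G.pathTerm i δ)) (U i) t ≤
        G.branchSum s (fun i => layerWeight s a (KC i) (U i))
          (fun i => condensationWeight s N (C i)) δ t := by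
  filter_upwards [eventually_layerWeight_le_edgeSum hKC hU s a] with N hN δ
  induction δ with
  | nil =>
    intro i _ t
    simp [branchSum, pathMap, pathTerm, layerWeight_empty]
  | cons e δ ih =>
    rintro _ ⟨rfl, hδ⟩ t
    set P := G.pathMap δ '' KC (G.pathTerm (G.term e) δ)
    set A := Function.update (fun e' => KC (G.term e')) e (KC (G.term e) \ P) with hA
    have hAKC (e' : E) : A e' ⊆ KC (G.term e') := by
      rcases eq_or_ne e' e with rfl | he'
      · simp [hA]
      · simp [hA, he']
    simp only [branchSum, pathMap, pathTerm, image_comp]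
    refine (hN (G.init e) A _ hAKC (hKC.sdiff_image_subset e P) t).trans
      (add_le_add (edgeSum_le_edgeSum ?_) le_rfl)
    intro e' _
    rcases eq_or_ne e' e with rfl | hne
    · simpa [hA] using ih (G.term e') hδ _
    · simp [hA, hne]

theorem eventually_layerWeight_le_branchSum [DecidableEq E] (hKC : G.IsInhomAttractor C KC)
    (hU : G.IsOSCWith U) {γ : V → List E} (hγ : ∀ i, G.IsPathFrom i (γ i)) {ε : V → ℝ}
    (hε : ∀ i, 0 < ε i)
    (hdisj : ∀ i, Disjoint (G.pathMap (γ i) '' KC (G.pathTerm i (γ i))) (thickening (ε i) (U i)ᶜ))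
    (s a : ℝ) :
    ∀ᶠ N in atTop, ∀ i t, layerWeight s a (KC i) (U i) t ≤
      G.branchSum s (fun i => layerWeight s a (KC i) (U i))
        (fun i => condensationWeight s N (C i)) (γ i) t + condensationWeight s N (C i) t := by
  choose M hM using fun i =>
    exists_layerWeight_le_of_disjoint_thickening (hKC.isBounded i) (hε i) (hdisj i) s a
  filter_upwards [eventually_layerWeight_sdiff_le_branchSum hKC hU s a, eventually_ge_atTop 0,
    eventually_all.2 fun i => eventually_ge_atTop (M i)] with N hN hN0 hMN i t
  have hbranch := hN (γ i) i (hγ i) t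
  rcases lt_or_ge t 0 with ht | ht
  · rw [layerWeight_of_neg ht]
    exact add_nonneg ((layerWeight_nonneg ..).trans hbranch) (condensationWeight_nonneg hN0 _ t)
  · refine (hM i t).trans (add_le_add hbranch ?_)
    rw [condensationWeight_of_nonneg ht]
    exact le_add_of_nonneg_of_le (weightedCoveringNumber_nonneg ..) (by gcongr; exact hMN i)

theorem boundedUnitSums_layerWeight (hK : G.IsAttractor K) (hKC : G.IsInhomAttractor C KC)
    (hU : G.IsOSCWith U) (hUK : ∀ i, (U i ∩ K i).Nonempty) (hs : 0 ≤ s) {v : V → ℝ}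
    (hv0 : ∀ i, 0 < v i) (hv : (G.Amatrix s).mulVec v ≤ v)
    (hint : ∀ i, ∫⁻ t in Ioi (0 : ℝ), ENNReal.ofReal (weightedCoveringNumber s (C i) t) < ⊤)
    (a : ℝ) (i : V) : BoundedUnitSums (layerWeight s a (KC i) (U i)) := by
  classical
  choose γ hγ ε hε hdisj using exists_path_disjoint_thickening_compl hK hKC hU hUK
  obtain ⟨N, hN, hN0⟩ := ((eventually_layerWeight_le_branchSum hKC hU hγ hε hdisj s a).and
    (eventually_ge_atTop 0)).exists
  exact boundedUnitSums_of_le_branchSum (F := fun i => layerWeight s a (KC i) (U i)) hs hv0 hv hγ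
    (fun i t ht => (layerWeight_of_neg ht).le) hN
    (fun i => boundedUnitSums_condensationWeight hs (hKC.isBounded_condensation i) hN0 (hint i)) i

theorem exp_mul_abs_sum_coveringNumber_sub_le (hKC : G.IsInhomAttractor C KC) (hU : G.IsOSCWith U)
    (hCU : ∀ i, C i ⊆ closure (U i)) (hs : 0 ≤ s) (i : V) {u : ℝ} (htu : t ≤ u) (hut : u ≤ t + 1) :
    Real.exp (-s * t) * |∑ e with G.init e = i,
        (coveringNumber (G.S e '' KC (G.term e)) (Real.exp (-t)) : ℝ) -
          coveringNumber (KC i) (Real.exp (-t))| ≤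
      Real.exp s * (∑ e with G.init e = i, weightedCoveringNumber s
        (boundaryLayer (G.S e '' KC (G.term e)) (G.S e '' U (G.term e)) (3 * Real.exp 1) u) u +
          weightedCoveringNumber s (C i) u) := by
  set T := fun e => G.S e '' KC (G.term e)
  set W := fun e => G.S e '' U (G.term e)
  have hT (e : E) : Bornology.IsBounded (T e) := (hKC.isBounded _).subset (hKC.image_subset e)
  have hCbdd := hKC.isBounded_condensation i
  have hTW : ∀ e ∈ ({e | G.init e = i} : Finset E), ∀ e' ∈ ({e | G.init e = i} : Finset E),
      e ≠ e' → Disjoint (T e') (W e) := fun e he e' he' hne =>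
    disjoint_image_image hKC hU hCU
      ((Finset.mem_filter.1 he).2.trans (Finset.mem_filter.1 he').2.symm) hne
  calc Real.exp (-s * t) * |∑ e with G.init e = i, (coveringNumber (T e) (Real.exp (-t)) : ℝ) -
          coveringNumber (KC i) (Real.exp (-t))|
      = |∑ e with G.init e = i, weightedCoveringNumber s (T e) t -
          weightedCoveringNumber s (KC i) t| := by
        simp only [weightedCoveringNumber, ← Finset.mul_sum, ← mul_sub, abs_mul, Real.abs_exp]
    _ ≤ ∑ e with G.init e = i, weightedCoveringNumber s (boundaryLayer (T e) (W e) 3 t) t +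
          weightedCoveringNumber s (C i) t := by
        rw [hKC.eq_biUnion_filter_union]
        exact abs_sum_weightedCoveringNumber_sub_le (fun e _ => hT e) hCbdd hTW (by norm_num)
    _ ≤ ∑ e with G.init e = i, Real.exp s *
            weightedCoveringNumber s (boundaryLayer (T e) (W e) (3 * Real.exp 1) u) u +
          Real.exp s * weightedCoveringNumber s (C i) u := by
        gcongr with e
        · exact weightedCoveringNumber_le_exp_mul hs ((hT e).subset boundaryLayer_subset)
            (boundaryLayer_subset_boundaryLayer_exp_one (by norm_num) hut) htu hut
        · exact weightedCoveringNumber_le_exp_mul hs hCbdd subset_rfl htu hut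
    _ = _ := by rw [← Finset.mul_sum, ← mul_add]

end MWGraph

theorem stmt6_general {d : ℕ} {V E : Type} [Fintype V] [Fintype E] [DecidableEq V]
    (G : MWGraph d V E) (C K KC U : V → Set (Pt d)) (hK : G.IsAttractor K)
    (hKC : G.IsInhomAttractor C KC) (hU : G.IsOSCWith U) (hUK : ∀ i, (U i ∩ K i).Nonempty)
    (hCU : ∀ i, C i ⊆ closure (U i)) (s : ℝ) (hs : 0 ≤ s) (v : V → ℝ) (hv0 : ∀ i, 0 < v i)
    (hv : (G.Amatrix s).mulVec v ≤ v)
    (hint : ∀ i, ∫⁻ t in Ioi (0 : ℝ), ENNReal.ofReal (weightedCoveringNumber s (C i) t) < ⊤)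
    (Lstar : V → ℝ → ℝ)
    (hLstar : ∀ i t, Lstar i t =
      (∑ e : E, if G.init e = i then
        (coveringNumber (G.S e '' KC (G.term e)) (Real.exp (-t)) : ℝ) else 0) -
          coveringNumber (KC i) (Real.exp (-t))) (i : V) :
    Summable fun k : ℕ =>
      sSup {x : ℝ | ∃ t ∈ Icc (k : ℝ) (k + 1), x = Real.exp (-s * t) * |Lstar i t|} := by
  obtain ⟨N, hN, hN0⟩ := ((MWGraph.eventually_sum_boundaryLayer_image_le hKC s
    (3 * Real.exp 1)).and (eventually_ge_atTop 0)).exists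
  have hlayer (e : E) : BoundedUnitSums
      (layerWeight s (3 * Real.exp 1) (KC (G.term e)) (U (G.term e))) :=
    MWGraph.boundedUnitSums_layerWeight hK hKC hU hUK hs hv0 hv hint _ _
  have hbound := (MWGraph.boundedUnitSums_edgeSum (G := G) (s := s) hlayer i).add
    (boundedUnitSums_condensationWeight hs (hKC.isBounded_condensation i) hN0 (hint i))
  refine (hbound.const_mul (Real.exp_nonneg s)).summable_sSup (fun t => by positivity) ?_
  intro k t ht
  rw [hLstar, ← Finset.sum_filter]
  refine (MWGraph.exp_mul_abs_sum_coveringNumber_sub_le hKC hU hCU hs i ht.2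
    (by linarith [ht.1])).trans ?_
  exact mul_le_mul_of_nonneg_left (hN i _ _ (fun _ => subset_rfl) _ (by positivity))
    (Real.exp_nonneg s)

theorem stmt6 {d : ℕ} {V E : Type} [Fintype V] [Fintype E] [DecidableEq V]
    (G : MWGraph d V E) (hSC : G.StronglyConnected)
    (C K KC U : V → Set (Pt d))
    (hC : G.IsCondensation C) (hK : G.IsAttractor K) (hKC : G.IsInhomAttractor C KC)
    (hU : G.IsOSCWith U) (hUK : ∀ i, (U i ∩ K i).Nonempty)
    (hCU : ∀ i, C i ⊆ closure (U i))
    (s0 : ℝ) (hs0 : IsS0 G s0)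
    (hint : ∀ i : V, ∫⁻ t in Set.Ioi (0 : ℝ),
      ENNReal.ofReal (Real.exp (-s0 * t) * (coveringNumber (C i) (Real.exp (-t)) : ℝ)) < ⊤)
    (Lstar : V → ℝ → ℝ)
    (hLstar : ∀ (i : V) (t : ℝ), Lstar i t =
      (∑ e : E, if G.init e = i then
        ((coveringNumber (G.S e '' KC (G.term e)) (Real.exp (-t)) : ℝ)) else 0)
      - (coveringNumber (KC i) (Real.exp (-t)) : ℝ))
 :
    ∀ i : V, Summable (fun k : ℕ =>
      sSup {x : ℝ | ∃ t ∈ Set.Icc (k : ℝ) (k + 1), x = Real.exp (-s0 * t) * |Lstar i t|}) := by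
  obtain ⟨v, hv0, hv⟩ := MWGraph.exists_pos_mulVec_Amatrix_le hSC hs0.2.le
  exact stmt6_general G C K KC U hK hKC hU hUK hCU s0 hs0.1 v hv0 hv hint Lstar hLstar
end
end

section
/- Let (G,C) be an inhomogeneous Mauldin–Williams graph in ℝ^d with condensation sets (C_i)_{i∈V}. Then for every i ∈ V, K_i^C = K_i ∪ ⋃_{γ∈Γ_i^*} S_γ(C_{t(γ)}), where (K_i)_{i∈V} are the graph-directed self-similar sets of G (the case of empty condensation). -/
open Set Filter Topology MeasureTheory Metric

noncomputable section

/-!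
Let `H` be the Hutchinson operator of the graph and `O` the union of the images of the condensation
sets along paths. If `A ≤ H A` and `H B ≤ B`, then the excess of `A` over `B` is at most `ρ < 1`
times itself, because `H` contracts it; being finite, it vanishes. So a bounded sub-invariant family
lies in every closed super-invariant family of non-empty sets. The inclusion `K ⊆ K^C` is an
instance. For `K^C ⊆ K ∪ O`, the point is that `K^C \ O` is again sub-invariant: both families solve
`A = H A ∪ C`, and `H` commutes with unions. Finally `O ⊆ K^C` because `O` is the least solution.
-/

open scoped ENNReal NNReal

theorem infEDist_image_le_mul_of_lipschitzWith {α β : Type*} [PseudoEMetricSpace α]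
    [PseudoEMetricSpace β] {ρ : ℝ≥0} {f : α → β} (hf : LipschitzWith ρ f) (x : α) {s : Set α}
    (hs : s.Nonempty) : infEDist (f x) (f '' s) ≤ ρ * infEDist x s := by
  have : Nonempty s := hs.to_subtype
  have hmul : ρ * infEDist x s = ⨅ y : s, ρ * edist x y := by
    rw [infEDist, iInf_subtype', ENNReal.mul_iInf fun h => absurd h ENNReal.coe_ne_top]
  rw [hmul]
  exact le_iInf fun y =>
    (infEDist_le_edist_of_mem (mem_image_of_mem f y.2)).trans (hf.edist_le_mul x y)

theorem eq_zero_of_le_mul_self_of_lt_one {x r : ℝ≥0∞} (hr : r < 1) (hx : x ≠ ⊤)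
    (h : x ≤ r * x) : x = 0 := by
  by_contra hx0
  exact h.not_gt (by simpa only [one_mul] using ENNReal.mul_lt_mul_left hx0 hx hr)

section HausdorffExcess

variable {ι α : Type*}

/-- The excess of a family of sets `A` over a family `B`: the one-sided Hausdorff distance, that is,
the supremum over all `i` and all points of `A i` of the distance to `B i`. -/
def hausdorffExcess [PseudoEMetricSpace α] (A B : ι → Set α) : ℝ≥0∞ :=
  ⨆ i, ⨆ x ∈ A i, infEDist x (B i)

theorem hausdorffExcess_le_iff [PseudoEMetricSpace α] {A B : ι → Set α} {δ : ℝ≥0∞} :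
    hausdorffExcess A B ≤ δ ↔ ∀ i, ∀ x ∈ A i, infEDist x (B i) ≤ δ := by
  simp only [hausdorffExcess, iSup_le_iff]

theorem infEDist_le_hausdorffExcess [PseudoEMetricSpace α] (A B : ι → Set α) {i : ι} {x : α}
    (hx : x ∈ A i) : infEDist x (B i) ≤ hausdorffExcess A B :=
  hausdorffExcess_le_iff.1 le_rfl i x hx

theorem hausdorffExcess_mono [PseudoEMetricSpace α] {A A' B B' : ι → Set α} (hA : A ≤ A')
    (hB : B' ≤ B) : hausdorffExcess A B ≤ hausdorffExcess A' B' :=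
  hausdorffExcess_le_iff.2 fun i _ hx =>
    (infEDist_anti (hB i)).trans (infEDist_le_hausdorffExcess A' B' (hA i hx))

theorem hausdorffExcess_ne_top [PseudoMetricSpace α] {A B : ι → Set α}
    (hA : Bornology.IsBounded (⋃ i, A i)) (hB : Bornology.IsBounded (⋃ i, B i))
    (hB_nonempty : ∀ i, (B i).Nonempty) : hausdorffExcess A B ≠ ⊤ := by
  refine ne_top_of_le_ne_top (hA.union hB).ediam_ne_top (hausdorffExcess_le_iff.2 fun i x hx => ?_)
  obtain ⟨y, hy⟩ := hB_nonempty i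
  exact (infEDist_le_edist_of_mem hy).trans
    (edist_le_ediam_of_mem (Or.inl (mem_iUnion_of_mem i hx)) (Or.inr (mem_iUnion_of_mem i hy)))

end HausdorffExcess

/-- A directed multigraph with vertices `V` and edges `E`, together with a self-map of `α` for each
edge: the data of a Mauldin–Williams graph that enter the set equation. As there, `map e` carries
sets attached to the vertex `term e` to sets attached to `init e`. -/
structure GraphDirectedSystem (V E α : Type*) where
  init : E → V
  term : E → V
  map : E → α → α

namespace GraphDirectedSystem

variable {V E α : Type*} (D : GraphDirectedSystem V E α)

/-- The Hutchinson operator `H` of a graph-directed system. The set equation with condensation `C`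
is `H A ⊔ C = A`. -/
def hutchinson : (V → Set α) →o (V → Set α) where
  toFun A i := ⋃ e ∈ {e | D.init e = i}, D.map e '' A (D.term e)
  monotone' _ _ hAB _ := biUnion_mono subset_rfl fun _ _ => image_mono (hAB _)

theorem mem_hutchinson {A : V → Set α} {i : V} {x : α} :
    x ∈ D.hutchinson A i ↔ ∃ e, D.init e = i ∧ ∃ y ∈ A (D.term e), D.map e y = x := by
  simp only [hutchinson, OrderHom.coe_mk, mem_iUnion₂, mem_ofPred_eq, exists_prop, mem_image]

theorem hutchinson_sup (A B : V → Set α) :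
    D.hutchinson (A ⊔ B) = D.hutchinson A ⊔ D.hutchinson B := by
  ext i x
  simp only [Pi.sup_apply, sup_eq_union, mem_union, mem_hutchinson, or_and_right, exists_or,
    and_or_left]

theorem sdiff_le_hutchinson_sdiff {C A O : V → Set α} (hA : A ≤ D.hutchinson A ⊔ C)
    (hO : D.hutchinson O ⊔ C ≤ O) : A \ O ≤ D.hutchinson (A \ O) := by
  refine sdiff_le_iff.2 ?_
  calc A ≤ D.hutchinson A ⊔ C := hA
    _ ≤ D.hutchinson (O ⊔ A \ O) ⊔ C := sup_le_sup_right (D.hutchinson.mono le_sup_sdiff) C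
    _ = D.hutchinson O ⊔ C ⊔ D.hutchinson (A \ O) := by rw [hutchinson_sup, sup_right_comm]
    _ ≤ O ⊔ D.hutchinson (A \ O) := sup_le_sup_right hO _

/-- The orbital set of a family `C` of condensation sets: the union of the images of `C` along all
finite paths. It is encoded without paths, as the least solution of the set equation; see
`MWGraph.orbitalSet_apply` for the description by paths. -/
def orbitalSet (C : V → Set α) : V → Set α :=
  (D.hutchinson ⊔ OrderHom.const _ C).lfp

theorem hutchinson_orbitalSet_sup (C : V → Set α) :
    D.hutchinson (D.orbitalSet C) ⊔ C = D.orbitalSet C :=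
  (D.hutchinson ⊔ OrderHom.const _ C).map_lfp

theorem orbitalSet_le {C A : V → Set α} (h : D.hutchinson A ⊔ C ≤ A) : D.orbitalSet C ≤ A :=
  OrderHom.lfp_le _ h

section Contracting

variable {D} {ρ : ℝ≥0}

theorem hausdorffExcess_hutchinson_le [PseudoEMetricSpace α] (hD : ∀ e, LipschitzWith ρ (D.map e))
    (A : V → Set α) {B : V → Set α} (hB : ∀ i, (B i).Nonempty) :
    hausdorffExcess (D.hutchinson A) (D.hutchinson B) ≤ ρ * hausdorffExcess A B := by
  refine hausdorffExcess_le_iff.2 fun i x hx => ?_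
  obtain ⟨e, rfl, y, hy, rfl⟩ := D.mem_hutchinson.1 hx
  have hsub : D.map e '' B (D.term e) ⊆ D.hutchinson B (D.init e) :=
    fun _ ⟨z, hz, hzx⟩ => D.mem_hutchinson.2 ⟨e, rfl, z, hz, hzx⟩
  calc infEDist (D.map e y) (D.hutchinson B (D.init e))
      ≤ infEDist (D.map e y) (D.map e '' B (D.term e)) := infEDist_anti hsub
    _ ≤ ρ * infEDist y (B (D.term e)) :=
        infEDist_image_le_mul_of_lipschitzWith (hD e) y (hB _)
    _ ≤ ρ * hausdorffExcess A B := by gcongr; exact infEDist_le_hausdorffExcess A B hy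

theorem subset_closure_of_le_hutchinson_of_hutchinson_le [PseudoEMetricSpace α]
    (hD : ∀ e, LipschitzWith ρ (D.map e)) (hρ : ρ < 1) {A B : V → Set α}
    (hA : A ≤ D.hutchinson A) (hB : D.hutchinson B ≤ B) (hB_nonempty : ∀ i, (B i).Nonempty)
    (hAB : hausdorffExcess A B ≠ ⊤) (i : V) : A i ⊆ closure (B i) := by
  have hself : hausdorffExcess A B ≤ ρ * hausdorffExcess A B :=
    (hausdorffExcess_mono hA hB).trans (hausdorffExcess_hutchinson_le hD A hB_nonempty)
  have hzero : hausdorffExcess A B = 0 :=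
    eq_zero_of_le_mul_self_of_lt_one (ENNReal.coe_lt_one_iff.2 hρ) hAB hself
  exact fun x hx => mem_closure_iff_infEDist_zero.2
    (le_zero_iff.1 (hzero ▸ infEDist_le_hausdorffExcess A B hx))

variable [PseudoMetricSpace α]

variable (D) in
/-- `K` is a solution of the set equation with condensation `C`, consisting of non-empty closed
sets that are uniformly bounded; over a finite vertex set in a proper metric space these are the
inhomogeneous graph-directed self-similar sets. The homogeneous case is `C = ⊥`. -/
structure IsInhomInvariant (C K : V → Set α) : Prop where
  nonempty : ∀ i, (K i).Nonempty
  isClosed : ∀ i, IsClosed (K i)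
  isBounded : Bornology.IsBounded (⋃ i, K i)
  hutchinson_sup_eq : D.hutchinson K ⊔ C = K

theorem IsInhomInvariant.le_of_le_hutchinson {C A K : V → Set α} (hK : D.IsInhomInvariant C K)
    (hD : ∀ e, LipschitzWith ρ (D.map e)) (hρ : ρ < 1) (hA : A ≤ D.hutchinson A)
    (hA_bounded : Bornology.IsBounded (⋃ i, A i)) : A ≤ K := by
  have hK_super : D.hutchinson K ≤ K := le_sup_left.trans hK.hutchinson_sup_eq.le
  exact fun i => (hK.isClosed i).closure_eq ▸
    subset_closure_of_le_hutchinson_of_hutchinson_le hD hρ hA hK_super hK.nonempty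
      (hausdorffExcess_ne_top hA_bounded hK.isBounded hK.nonempty) i

end Contracting

end GraphDirectedSystem

namespace MWGraph

variable {d : ℕ} {V E : Type} [Fintype V] [Fintype E] (G : MWGraph d V E)

/-- The graph-directed system of a Mauldin–Williams graph, which forgets the sets `X i` and the
ratios. -/
def toGraphDirectedSystem : GraphDirectedSystem V E (Pt d) :=
  ⟨G.init, G.term, G.S⟩

theorem exists_lt_one_forall_lipschitzWith : ∃ ρ < (1 : ℝ≥0), ∀ e, LipschitzWith ρ (G.S e) := by
  refine ⟨Finset.univ.sup fun e => (G.r e).toNNReal, ?_, fun e => ?_⟩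
  · exact (Finset.sup_lt_iff zero_lt_one).2 fun e _ => Real.toNNReal_lt_one.2 (G.r_lt_one e)
  · have hSe : LipschitzWith (G.r e).toNNReal (G.S e) := LipschitzWith.of_dist_le_mul fun x y => by
      rw [Real.coe_toNNReal _ (G.r_pos e).le, G.S_sim]
    exact hSe.weaken (Finset.le_sup (f := fun e => (G.r e).toNNReal) (Finset.mem_univ e))

variable {G} in
theorem IsInhomAttractor.isInhomInvariant {C K : V → Set (Pt d)} (hK : G.IsInhomAttractor C K) :
    G.toGraphDirectedSystem.IsInhomInvariant C K where
  nonempty := hK.2.1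
  isClosed i := (hK.1 i).isClosed
  isBounded := Bornology.isBounded_iUnion.2 fun i => (hK.1 i).isBounded
  hutchinson_sup_eq := funext fun i => (hK.2.2 i).symm

variable {G} in
theorem IsAttractor.isInhomAttractor_bot {K : V → Set (Pt d)} (hK : G.IsAttractor K) :
    G.IsInhomAttractor ⊥ K :=
  ⟨hK.1, hK.2.1, fun i => (hK.2.2 i).trans (union_empty _).symm⟩

theorem pathMap_image_subset_orbitalSet (C : V → Set (Pt d)) {i : V} {γ : List E}
    (hγ : G.IsPathFrom i γ) :
    G.pathMap γ '' C (G.pathTerm i γ) ⊆ G.toGraphDirectedSystem.orbitalSet C i := by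
  have hO := (G.toGraphDirectedSystem.hutchinson_orbitalSet_sup C).le
  rintro _ ⟨x, hx, rfl⟩
  induction γ generalizing i with
  | nil => exact hO i (Or.inr hx)
  | cons e γ ih =>
    obtain ⟨rfl, hγ⟩ := hγ
    exact hO _ (Or.inl ((GraphDirectedSystem.mem_hutchinson _).2 ⟨e, rfl, _, ih hγ hx, rfl⟩))

theorem orbitalSet_apply (C : V → Set (Pt d)) (i : V) :
    G.toGraphDirectedSystem.orbitalSet C i =
      ⋃ γ : {γ : List E // G.IsPathFrom i γ}, G.pathMap γ.val '' C (G.pathTerm i γ.val) := by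
  refine Subset.antisymm ?_ (iUnion_subset fun γ => G.pathMap_image_subset_orbitalSet C γ.2)
  refine G.toGraphDirectedSystem.orbitalSet_le (A := fun i =>
    ⋃ γ : {γ : List E // G.IsPathFrom i γ}, G.pathMap γ.val '' C (G.pathTerm i γ.val)) ?_ i
  refine sup_le (fun i x hx => ?_) fun i x hx => ?_
  · obtain ⟨e, rfl, y, hy, rfl⟩ := (GraphDirectedSystem.mem_hutchinson _).1 hx
    obtain ⟨⟨γ, hγ⟩, z, hz, rfl⟩ := mem_iUnion.1 hy
    exact mem_iUnion.2 ⟨⟨e :: γ, rfl, hγ⟩, z, hz, rfl⟩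
  · exact mem_iUnion.2 ⟨⟨[], trivial⟩, x, hx, rfl⟩

end MWGraph

theorem stmt7_general {V E α : Type*} [PseudoMetricSpace α] {D : GraphDirectedSystem V E α}
    {ρ : ℝ≥0} (hD : ∀ e, LipschitzWith ρ (D.map e)) (hρ : ρ < 1) {C K KC : V → Set α}
    (hK : D.IsInhomInvariant ⊥ K) (hKC : D.IsInhomInvariant C KC) :
    KC = K ⊔ D.orbitalSet C := by
  have hK_sub : K ≤ D.hutchinson K := by
    simpa only [sup_bot_eq] using hK.hutchinson_sup_eq.ge
  have hdiff_sub : KC \ D.orbitalSet C ≤ D.hutchinson (KC \ D.orbitalSet C) :=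
    D.sdiff_le_hutchinson_sdiff hKC.hutchinson_sup_eq.ge (D.hutchinson_orbitalSet_sup C).le
  have hdiff_bounded : Bornology.IsBounded (⋃ i, (KC \ D.orbitalSet C) i) :=
    hKC.isBounded.subset (iUnion_mono fun _ => sdiff_subset)
  apply le_antisymm
  · rw [sup_comm]
    exact sdiff_le_iff.1 (hK.le_of_le_hutchinson hD hρ hdiff_sub hdiff_bounded)
  · exact sup_le (hKC.le_of_le_hutchinson hD hρ hK_sub hK.isBounded)
      (D.orbitalSet_le hKC.hutchinson_sup_eq.le)

theorem stmt7 {d : ℕ} {V E : Type} [Fintype V] [Fintype E]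
    (G : MWGraph d V E)
    (C K KC : V → Set (Pt d))
    (hC : G.IsCondensation C) (hK : G.IsAttractor K) (hKC : G.IsInhomAttractor C KC) :
    ∀ i : V, KC i = K i ∪
      ⋃ γ : {γ : List E // G.IsPathFrom i γ}, G.pathMap γ.val '' C (G.pathTerm i γ.val) := by
  obtain ⟨ρ, hρ, hS⟩ := G.exists_lt_one_forall_lipschitzWith
  intro i
  rw [← G.orbitalSet_apply C i]
  exact congrFun (stmt7_general (D := G.toGraphDirectedSystem) hS hρ
    hK.isInhomAttractor_bot.isInhomInvariant hKC.isInhomInvariant) i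
end
end
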